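/- arXiv:1902.03887 — 3 statements merged into one kernel-verified Lean document; each statement's English description precedes it below -/
import Mathlib

section
/- Let P be the uniform probability distribution on the boundary L of the regular hexagon with vertices (0,0), (1,0), (3/2,√3/2), (1,√3), (0,√3), (−1/2,√3/2), and let Vₙ(P) denote the nth quantization error. Then the quantization dimension of P exists and equals 1; that is, lim_{n→∞} (2 log n)/(−log Vₙ(P)) = 1. -/
open MeasureTheory Real Filter
open scoped ENNReal

noncomputable section

/-- The plane `ℝ²` with the Euclidean norm. -/
abbrev E2 : Type := EuclideanSpace ℝ (Fin 2)

/-- The point `(a, b)` of `ℝ²`. -/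
def pt (a b : ℝ) : E2 := !₂[a, b]

/-- The `n`th quantization error of a Borel probability measure `P` on `ℝ²`:
the infimum of `∫ min_{a ∈ α} ‖x - a‖² dP(x)` over all (nonempty) finite sets
`α ⊆ ℝ²` with at most `n` elements. -/
def quantErr (P : Measure E2) (n : ℕ) : ℝ :=
  sInf {v : ℝ | ∃ α : Set E2, α.Finite ∧ α.Nonempty ∧ α.ncard ≤ n ∧
    v = ∫ x, sInf ((fun a => ‖x - a‖ ^ 2) '' α) ∂P}

/-- `α` is an optimal set of `n`-means for `P` if it attains the `n`th
quantization error. -/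
def IsOptimalSet (P : Measure E2) (n : ℕ) (α : Set E2) : Prop :=
  α.Finite ∧ α.Nonempty ∧ α.ncard ≤ n ∧
    (∫ x, sInf ((fun a => ‖x - a‖ ^ 2) '' α) ∂P) = quantErr P n

/-- The boundary `L` of the regular hexagon with vertices `O(0,0)`, `A₁(1,0)`,
`A₂(3/2,√3/2)`, `A₃(1,√3)`, `A₄(0,√3)`, `A₅(-1/2,√3/2)`. -/
def hexL : Set E2 :=
  segment ℝ (pt 0 0) (pt 1 0) ∪ segment ℝ (pt 1 0) (pt (3/2) (Real.sqrt 3/2)) ∪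
  segment ℝ (pt (3/2) (Real.sqrt 3/2)) (pt 1 (Real.sqrt 3)) ∪
  segment ℝ (pt 1 (Real.sqrt 3)) (pt 0 (Real.sqrt 3)) ∪
  segment ℝ (pt 0 (Real.sqrt 3)) (pt (-(1/2)) (Real.sqrt 3/2)) ∪
  segment ℝ (pt (-(1/2)) (Real.sqrt 3/2)) (pt 0 0)

/-- The uniform probability distribution on `hexL`: density `1/6` with respect
to the one-dimensional Hausdorff (arc-length) measure on `hexL`. -/
def hexP : Measure E2 := (6 : ℝ≥0∞)⁻¹ • (μH[1] : Measure E2).restrict hexL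

/-!
A finite measure whose balls of radius `r` have mass `O(r ^ d)`, carried by a set with `ε`-covers of
size `O(ε ^ (-d))`, has quantization error of exact order `n ^ (-2 / d)`. Balls of radius
`r ≍ n ^ (-1 / d)` around any `n` points miss half of the mass, so the error is at least of order
`r ^ 2`, while a cover with `n` points has radius `ε ≍ n ^ (-1 / d)` and the error is at most of
order `ε ^ 2`. Taking logarithms, the quantization dimension is `d`. Arc length on a finite union of
segments satisfies both conditions with `d = 1`.
-/

open Metric Asymptotics Topology
open scoped NNReal

section LogAsymptotics

variable {ι : Type*} {l : Filter ι} {f g : ι → ℝ}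

lemma exists_eventually_log_sub_log_le (hfg : f =O[l] g) (hf : ∀ᶠ i in l, f i ≠ 0) :
    ∃ c, ∀ᶠ i in l, log (f i) - log (g i) ≤ c := by
  obtain ⟨C, hC, hbound⟩ := hfg.exists_pos
  refine ⟨log C, ?_⟩
  filter_upwards [hbound.bound, hf] with i hi hfi
  have hgi : g i ≠ 0 := fun h ↦ hfi (by simpa [h] using hi)
  have hlog : log ‖f i‖ ≤ log (C * ‖g i‖) := log_le_log (norm_pos_iff.2 hfi) hi
  rw [log_mul hC.ne' (norm_ne_zero_iff.2 hgi), norm_eq_abs, norm_eq_abs, log_abs, log_abs] at hlog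
  linarith

lemma isEquivalent_log_of_isTheta (hfg : f =Θ[l] g) (hg : Tendsto g l (𝓝[≠] 0)) :
    (fun i ↦ log (f i)) ~[l] fun i ↦ log (g i) := by
  have hg_ne : ∀ᶠ i in l, g i ≠ 0 := hg.eventually self_mem_nhdsWithin
  have hf_ne : ∀ᶠ i in l, f i ≠ 0 := by
    filter_upwards [hfg.eq_zero_iff, hg_ne] with i hi using mt hi.1
  obtain ⟨c₁, h₁⟩ := exists_eventually_log_sub_log_le hfg.isBigO hf_ne
  obtain ⟨c₂, h₂⟩ := exists_eventually_log_sub_log_le hfg.isBigO_symm hg_ne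
  have hbounded : (fun i ↦ log (f i) - log (g i)) =O[l] fun _ ↦ (1 : ℝ) := by
    refine IsBigO.of_bound (max c₁ c₂) ?_
    filter_upwards [h₁, h₂] with i hi₁ hi₂
    rw [norm_one, mul_one, norm_eq_abs]
    exact abs_le'.2 ⟨hi₁.trans (le_max_left _ _), by linarith [le_max_right c₁ c₂]⟩
  have hlog : Tendsto (fun i ↦ ‖log (g i)‖) l atTop :=
    tendsto_abs_atBot_atTop.comp (tendsto_log_nhdsNE_zero.comp hg)
  exact hbounded.trans_isLittleO ((isLittleO_one_left_iff ℝ).2 hlog)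

lemma tendsto_two_mul_log_div_neg_log_of_isTheta {V : ℕ → ℝ} {d : ℝ} (hd : 0 < d)
    (hV : V =Θ[atTop] fun n : ℕ ↦ (n : ℝ) ^ (-(2 / d))) :
    Tendsto (fun n : ℕ ↦ 2 * log n / -log (V n)) atTop (𝓝 d) := by
  have hpow : Tendsto (fun n : ℕ ↦ (n : ℝ) ^ (-(2 / d))) atTop (𝓝[≠] 0) := by
    refine tendsto_nhdsWithin_iff.2
      ⟨(tendsto_rpow_neg_atTop (by positivity)).comp tendsto_natCast_atTop_atTop, ?_⟩
    filter_upwards [eventually_gt_atTop 0] with n hn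
    exact (rpow_pos_of_pos (Nat.cast_pos.2 hn) _).ne'
  have hequiv : (fun n : ℕ ↦ 2 * log n / -log ((n : ℝ) ^ (-(2 / d)))) ~[atTop]
      fun n : ℕ ↦ 2 * log n / -log (V n) :=
    IsEquivalent.refl.div (isEquivalent_log_of_isTheta hV hpow).symm.neg
  refine hequiv.tendsto_nhds (tendsto_const_nhds.congr' ?_)
  filter_upwards [eventually_gt_atTop 1] with n hn
  have hlog : log n ≠ 0 := (log_pos (by exact_mod_cast hn)).ne'
  rw [log_rpow (by positivity)]
  field_simp

end LogAsymptotics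

section CoveringBound

variable {X Y : Type*} [PseudoMetricSpace X] [PseudoMetricSpace Y]

/-- Upper box-counting bound of dimension `d` with constant `K`: for every `ε ∈ (0, 1]` the set `s`
has an `ε`-cover by at most `K * ε ^ (-d)` points, not required to lie in `s`. -/
def CoveringBoundWith (K : ℝ≥0) (d : ℝ) (s : Set X) : Prop :=
  ∀ ε : ℝ≥0, 0 < ε → ε ≤ 1 →
    ∃ N : Set X, N.Finite ∧ (N.ncard : ℝ≥0) ≤ K * ε ^ (-d) ∧ IsCover ε s N

namespace CoveringBoundWith

variable {K K₁ K₂ L : ℝ≥0} {d : ℝ} {s t : Set X} {f : X → Y}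

lemma union (hs : CoveringBoundWith K₁ d s) (ht : CoveringBoundWith K₂ d t) :
    CoveringBoundWith (K₁ + K₂) d (s ∪ t) := by
  intro ε hε hε1
  obtain ⟨N₁, hfin₁, hcard₁, hcover₁⟩ := hs ε hε hε1
  obtain ⟨N₂, hfin₂, hcard₂, hcover₂⟩ := ht ε hε hε1
  refine ⟨N₁ ∪ N₂, hfin₁.union hfin₂, ?_, ?_⟩
  · calc ((N₁ ∪ N₂).ncard : ℝ≥0) ≤ N₁.ncard + N₂.ncard := mod_cast Set.ncard_union_le N₁ N₂
      _ ≤ (K₁ + K₂) * ε ^ (-d) := by rw [add_mul]; gcongr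
  · rintro x (hx | hx)
    · exact hcover₁.mono Set.subset_union_left hx
    · exact hcover₂.mono Set.subset_union_right hx

lemma image_lipschitz (hs : CoveringBoundWith K d s) (hf : LipschitzWith L f) :
    CoveringBoundWith (K * (L + 1) ^ d) d (f '' s) := by
  intro ε hε hε1
  have hle : ε / (L + 1) ≤ ε := div_le_self zero_le (by simp)
  obtain ⟨N, hfin, hcard, hcover⟩ := hs (ε / (L + 1)) (by positivity) (hle.trans hε1)
  refine ⟨f '' N, hfin.image f, ?_, (hcover.image_lipschitz hf).mono_radius ?_⟩
  · calc ((f '' N).ncard : ℝ≥0) ≤ N.ncard := mod_cast Set.ncard_image_le hfin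
      _ ≤ K * (ε / (L + 1)) ^ (-d) := hcard
      _ = K * (L + 1) ^ d * ε ^ (-d) := by
        rw [NNReal.div_rpow, NNReal.rpow_neg (L + 1), div_inv_eq_mul]; ring
  · calc L * (ε / (L + 1)) ≤ (L + 1) * (ε / (L + 1)) := by gcongr; simp
      _ = ε := mul_div_cancel₀ _ (by positivity)

lemma isBounded (hs : CoveringBoundWith K d s) : Bornology.IsBounded s := by
  obtain ⟨N, hfin, -, hcover⟩ := hs 1 one_pos le_rfl
  exact ((Bornology.isBounded_biUnion hfin).2 fun _ _ ↦ isBounded_closedBall).subset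
    hcover.subset_iUnion_closedBall

end CoveringBoundWith

lemma coveringBoundWith_Icc_zero_one : CoveringBoundWith 2 1 (Set.Icc (0 : ℝ) 1) := by
  intro ε hε hε1
  refine ⟨(fun k : ℕ ↦ (k * ε : ℝ)) '' Set.Iic ⌊1 / ε⌋₊, (Set.finite_Iic _).image _, ?_, ?_⟩
  · have hcard : ((fun k : ℕ ↦ (k * ε : ℝ)) '' Set.Iic ⌊1 / ε⌋₊).ncard ≤ ⌊1 / ε⌋₊ + 1 :=
      (Set.ncard_image_le (Set.finite_Iic _)).trans (by simp [Set.ncard_eq_toFinset_card'])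
    calc _ ≤ (⌊1 / ε⌋₊ : ℝ≥0) + 1 := mod_cast hcard
      _ ≤ 1 / ε + 1 / ε := add_le_add (Nat.floor_le zero_le) ((one_le_div hε).2 hε1)
      _ = 2 * ε ^ (-1 : ℝ) := by rw [NNReal.rpow_neg_one]; ring
  · rintro x ⟨hx0, hx1⟩
    have hε' : (0 : ℝ) < ε := hε
    refine ⟨⌊x / ε⌋₊ * ε, ⟨⌊x / ε⌋₊, ?_, rfl⟩, ?_⟩
    · refine Nat.le_floor ?_
      rw [← NNReal.coe_le_coe]
      push_cast
      exact (Nat.floor_le (by positivity)).trans (by gcongr)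
    · have hlow : ⌊x / ε⌋₊ * (ε : ℝ) ≤ x := (le_div_iff₀ hε').1 (Nat.floor_le (by positivity))
      have hupp : x < (⌊x / ε⌋₊ + 1) * (ε : ℝ) := (div_lt_iff₀ hε').1 (Nat.lt_floor_add_one _)
      change edist x _ ≤ ε
      rw [edist_le_coe, ← dist_le_coe, Real.dist_eq, abs_of_nonneg (by linarith)]
      linarith

lemma exists_coveringBoundWith_segment {E : Type*} [SeminormedAddCommGroup E] [NormedSpace ℝ E]
    (p q : E) : ∃ K, CoveringBoundWith K 1 (segment ℝ p q) := by
  rw [segment_eq_image_lineMap]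
  exact ⟨_, coveringBoundWith_Icc_zero_one.image_lipschitz (lipschitzWith_lineMap p q)⟩

end CoveringBound

section Frostman

variable {X : Type*} [PseudoMetricSpace X] [MeasurableSpace X]

/-- Frostman's condition of dimension `d` with constant `C`: every ball of radius `r` has mass at
most `C * r ^ d`. The centre ranges over the whole space, not only over the support of `μ`. -/
def FrostmanWith (C : ℝ≥0) (d : ℝ) (μ : Measure X) : Prop :=
  ∀ (x : X) (r : ℝ≥0), μ (ball x r) ≤ (C * r ^ d : ℝ≥0)

namespace FrostmanWith

variable {C C₁ C₂ : ℝ≥0} {d : ℝ} {μ : Measure X} {s t : Set X}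

lemma smul (h : FrostmanWith C d μ) {c : ℝ≥0∞} (hc : c ≠ ∞) :
    FrostmanWith (c.toNNReal * C) d (c • μ) := by
  intro x r
  rw [Measure.smul_apply, smul_eq_mul, mul_assoc, ENNReal.coe_mul, ENNReal.coe_toNNReal hc]
  gcongr
  exact h x r

lemma restrict_union (hs : FrostmanWith C₁ d (μ.restrict s))
    (ht : FrostmanWith C₂ d (μ.restrict t)) :
    FrostmanWith (C₁ + C₂) d (μ.restrict (s ∪ t)) := by
  intro x r
  calc μ.restrict (s ∪ t) (ball x r)
      ≤ μ.restrict s (ball x r) + μ.restrict t (ball x r) := Measure.restrict_union_le s t _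
    _ ≤ (C₁ * r ^ d : ℝ≥0) + (C₂ * r ^ d : ℝ≥0) := add_le_add (hs x r) (ht x r)
    _ = ((C₁ + C₂) * r ^ d : ℝ≥0) := by rw [add_mul, ENNReal.coe_add]

lemma measureReal_thickening_le (h : FrostmanWith C d μ) {α : Set X} (hα : α.Finite) (r : ℝ≥0) :
    μ.real (thickening r α) ≤ α.ncard * (C * r ^ d) := by
  have hcover : thickening (r : ℝ) α = ⋃ a ∈ hα.toFinset, ball a r := by
    simp [thickening_eq_biUnion_ball]
  have hsum : μ (thickening r α) ≤ (α.ncard * (C * r ^ d) : ℝ≥0) :=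
    calc μ (thickening r α) ≤ ∑ a ∈ hα.toFinset, μ (ball a r) :=
          hcover ▸ measure_biUnion_finset_le _ _
      _ ≤ ∑ _a ∈ hα.toFinset, ((C * r ^ d : ℝ≥0) : ℝ≥0∞) := Finset.sum_le_sum fun a _ ↦ h a r
      _ = (α.ncard * (C * r ^ d) : ℝ≥0) := by
        simp [Set.ncard_eq_toFinset_card α hα]
  simpa [Measure.real] using ENNReal.toReal_mono ENNReal.coe_ne_top hsum

end FrostmanWith

variable {E : Type*} [NormedAddCommGroup E] [NormedSpace ℝ E] [MeasurableSpace E] [BorelSpace E]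

lemma hausdorffMeasure_one_le_ediam_of_subset_segment {p q : E} {s : Set E}
    (hs : s ⊆ segment ℝ p q) : μH[1] s ≤ ediam s := by
  rcases eq_or_ne p q with rfl | hpq
  · calc μH[1] s ≤ μH[1] (segment ℝ p p) := measure_mono hs
      _ = 0 := by rw [hausdorffMeasure_segment, edist_self]
      _ ≤ ediam s := zero_le
  rw [segment_eq_image_lineMap] at hs
  obtain ⟨T, -, rfl⟩ := Set.subset_image_iff.1 hs
  calc μH[1] (AffineMap.lineMap p q '' T) = nndist p q * volume T := by
        rw [hausdorffMeasure_lineMap_image, hausdorffMeasure_real, ENNReal.smul_def, smul_eq_mul]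
    _ ≤ nndist p q * (((nndist p q)⁻¹ : ℝ≥0) * ediam (AffineMap.lineMap p q '' T)) := by
        gcongr
        exact (Real.volume_le_diam T).trans ((antilipschitzWith_lineMap hpq).le_mul_ediam_image T)
    _ = ediam (AffineMap.lineMap p q '' T) := by
        rw [← mul_assoc, ← ENNReal.coe_mul, mul_inv_cancel₀ (nndist_eq_zero.not.2 hpq),
          ENNReal.coe_one, one_mul]

lemma frostmanWith_hausdorffMeasure_restrict_segment (p q : E) :
    FrostmanWith 2 1 ((μH[1] : Measure E).restrict (segment ℝ p q)) := by
  intro x r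
  rw [Measure.restrict_apply measurableSet_ball]
  calc μH[1] (ball x r ∩ segment ℝ p q) ≤ ediam (ball x r ∩ segment ℝ p q) :=
        hausdorffMeasure_one_le_ediam_of_subset_segment Set.inter_subset_right
    _ ≤ ediam (ball x r) := ediam_mono Set.inter_subset_left
    _ = ediam (eball x (r : ℝ≥0∞)) := by rw [eball_coe]
    _ ≤ 2 * r := ediam_eball_le
    _ = (2 * r ^ (1 : ℝ) : ℝ≥0) := by simp

end Frostman

section QuantizationError

lemma sInf_image_norm_sub_sq_eq_infDist_sq {E : Type*} [SeminormedAddCommGroup E] {α : Set E}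
    (hα : α.Nonempty) (x : E) :
    sInf ((fun a ↦ ‖x - a‖ ^ 2) '' α) = infDist x α ^ 2 := by
  have hmono : MonotoneOn (fun r : ℝ ↦ r ^ 2) ((dist x ·) '' α) := by
    rintro _ ⟨a, -, rfl⟩ _ - hle
    exact pow_le_pow_left₀ dist_nonneg hle 2
  have hglb := isGLB_infDist (x := x) hα
  rw [← hglb.csInf_eq (hα.image _), hmono.map_csInf_of_continuousWithinAt
    (continuous_pow 2).continuousWithinAt (hα.image _) hglb.bddBelow, Set.image_image]
  simp only [dist_eq_norm]

lemma integrable_infDist_sq {E : Type*} [NormedAddCommGroup E] [MeasurableSpace E] [BorelSpace E]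
    [SecondCountableTopology E] {P : Measure E} [IsFiniteMeasure P] (hP : MemLp id 2 P) {α : Set E}
    (hα : α.Nonempty) : Integrable (fun x ↦ infDist x α ^ 2) P := by
  obtain ⟨a, ha⟩ := hα
  have hdist : MemLp (fun x ↦ ‖x - a‖) 2 P := (hP.sub (memLp_const a)).norm
  refine (hdist.mono' (continuous_infDist_pt α).aestronglyMeasurable ?_).integrable_sq
  refine Eventually.of_forall fun x ↦ ?_
  rw [norm_of_nonneg infDist_nonneg, ← dist_eq_norm]
  exact infDist_le_dist_of_mem ha

variable {P : Measure E2} {n : ℕ}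

lemma quantErr_eq_sInf_integral_infDist_sq (P : Measure E2) (n : ℕ) :
    quantErr P n = sInf ((fun α ↦ ∫ x, infDist x α ^ 2 ∂P) ''
      {α : Set E2 | α.Finite ∧ α.Nonempty ∧ α.ncard ≤ n}) := by
  refine congrArg sInf (Set.ext fun v ↦ exists_congr fun α ↦ ?_)
  refine ⟨fun ⟨hfin, hne, hcard, hv⟩ ↦ ⟨⟨hfin, hne, hcard⟩, ?_⟩,
    fun ⟨⟨hfin, hne, hcard⟩, hv⟩ ↦ ⟨hfin, hne, hcard, ?_⟩⟩
  · simp only [hv, sInf_image_norm_sub_sq_eq_infDist_sq hne]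
  · simp only [← hv, sInf_image_norm_sub_sq_eq_infDist_sq hne]

lemma quantErr_nonneg (P : Measure E2) (n : ℕ) : 0 ≤ quantErr P n := by
  rw [quantErr_eq_sInf_integral_infDist_sq]
  refine Real.sInf_nonneg ?_
  rintro _ ⟨α, -, rfl⟩
  positivity

lemma quantErr_le_integral {α : Set E2} (hfin : α.Finite) (hne : α.Nonempty) (hcard : α.ncard ≤ n) :
    quantErr P n ≤ ∫ x, infDist x α ^ 2 ∂P := by
  rw [quantErr_eq_sInf_integral_infDist_sq]
  refine csInf_le ⟨0, ?_⟩ ⟨α, ⟨hfin, hne, hcard⟩, rfl⟩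
  rintro _ ⟨β, -, rfl⟩
  positivity

lemma le_quantErr (hn : 0 < n) {v : ℝ}
    (hv : ∀ α : Set E2, α.Finite → α.Nonempty → α.ncard ≤ n → v ≤ ∫ x, infDist x α ^ 2 ∂P) :
    v ≤ quantErr P n := by
  rw [quantErr_eq_sInf_integral_infDist_sq]
  refine le_csInf (Set.Nonempty.image _ ⟨{0}, Set.finite_singleton 0, ?_⟩) ?_
  · exact ⟨Set.singleton_nonempty 0, by rwa [Set.ncard_singleton]⟩
  · rintro _ ⟨α, ⟨hfin, hne, hcard⟩, rfl⟩
    exact hv α hfin hne hcard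

variable [IsFiniteMeasure P] {C K : ℝ≥0} {d : ℝ} {s : Set E2}

lemma quantErr_le_of_isCover [NeZero P] (hs : ∀ᵐ x ∂P, x ∈ s) {ε : ℝ≥0} {N : Set E2}
    (hcover : IsCover ε s N) (hfin : N.Finite) (hcard : N.ncard ≤ n) :
    quantErr P n ≤ ε ^ 2 * P.real Set.univ := by
  refine (quantErr_le_integral hfin (hcover.nonempty hs.exists) hcard).trans ?_
  refine (le_norm_self _).trans (norm_integral_le_of_norm_le_const ?_)
  filter_upwards [hs] with x hx
  obtain ⟨a, ha, hxa⟩ := hcover hx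
  rw [norm_of_nonneg (sq_nonneg _)]
  gcongr
  · exact infDist_nonneg
  · exact (infDist_le_dist_of_mem ha).trans (dist_le_coe.2 (edist_le_coe.1 hxa))

lemma FrostmanWith.sq_mul_sub_le_quantErr (hP : FrostmanWith C d P) (hmom : MemLp id 2 P)
    (hn : 0 < n) (r : ℝ≥0) :
    (r : ℝ) ^ 2 * (P.real Set.univ - n * (C * r ^ d)) ≤ quantErr P n := by
  refine le_quantErr hn fun α hfin hne hcard ↦ ?_
  have hthick : P.real (thickening r α) ≤ n * (C * r ^ d) :=
    (hP.measureReal_thickening_le hfin r).trans (by gcongr)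
  have hfar : (thickening (r : ℝ) α)ᶜ = {x | (r : ℝ) ^ 2 ≤ infDist x α ^ 2} := by
    ext x
    rw [Set.mem_compl_iff, mem_thickening_iff_infDist_lt hne, not_lt]
    exact (pow_le_pow_iff_left₀ r.coe_nonneg infDist_nonneg two_ne_zero).symm
  calc (r : ℝ) ^ 2 * (P.real Set.univ - n * (C * r ^ d))
      ≤ (r : ℝ) ^ 2 * (P.real Set.univ - P.real (thickening r α)) := by gcongr
    _ = (r : ℝ) ^ 2 * P.real {x | (r : ℝ) ^ 2 ≤ infDist x α ^ 2} := by
        rw [← hfar, measureReal_compl isOpen_thickening.measurableSet]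
    _ ≤ ∫ x, infDist x α ^ 2 ∂P :=
        mul_meas_ge_le_integral_of_nonneg (Eventually.of_forall fun _ ↦ sq_nonneg _)
          (integrable_infDist_sq hmom hne) _

lemma coe_div_rpow_inv_sq (c x : ℝ≥0) (d : ℝ) :
    (((c / x) ^ d⁻¹ : ℝ≥0) : ℝ) ^ 2 = (c : ℝ) ^ (2 / d) * (x : ℝ) ^ (-(2 / d)) := by
  have hexp : d⁻¹ * (2 : ℕ) = 2 / d := by push_cast; ring
  rw [NNReal.coe_rpow, NNReal.coe_div, ← rpow_mul_natCast (by positivity), hexp,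
    div_rpow c.coe_nonneg x.coe_nonneg, rpow_neg x.coe_nonneg, div_eq_mul_inv]

theorem FrostmanWith.rpow_isBigO_quantErr [NeZero P] (hP : FrostmanWith C d P)
    (hmom : MemLp id 2 P) (hd : 0 < d) :
    (fun n : ℕ ↦ (n : ℝ) ^ (-(2 / d))) =O[atTop] quantErr P := by
  set M : ℝ≥0 := measureUnivNNReal P
  have hM : 0 < M := measureUnivNNReal_pos (NeZero.ne P)
  set c : ℝ≥0 := M / (2 * (C + 1)) with hc
  have hc_pos : 0 < c := by positivity
  refine IsBigO.of_bound ((c : ℝ) ^ (2 / d) * (M / 2))⁻¹ ?_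
  filter_upwards [eventually_gt_atTop 0] with n hn
  set r : ℝ≥0 := (c / n) ^ d⁻¹ with hr
  have hhalf : n * (C * r ^ d) ≤ M / 2 := by
    calc n * (C * r ^ d) = C * c := by rw [hr, NNReal.rpow_inv_rpow hd.ne']; field_simp
      _ ≤ (C + 1) * c := by gcongr; simp
      _ = M / 2 := by rw [hc]; field_simp
  have hlower : (n : ℝ) ^ (-(2 / d)) * ((c : ℝ) ^ (2 / d) * (M / 2)) ≤ quantErr P n :=
    calc (n : ℝ) ^ (-(2 / d)) * ((c : ℝ) ^ (2 / d) * (M / 2)) = (r : ℝ) ^ 2 * (M - M / 2) := by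
          rw [hr, coe_div_rpow_inv_sq, NNReal.coe_natCast]; ring
      _ ≤ (r : ℝ) ^ 2 * (P.real Set.univ - n * (C * r ^ d)) := by
          gcongr
          · rfl
          · exact_mod_cast hhalf
      _ ≤ quantErr P n := hP.sq_mul_sub_le_quantErr hmom hn r
  rw [norm_of_nonneg (by positivity), inv_mul_eq_div, le_div_iff₀ (by positivity)]
  exact hlower.trans (le_norm_self _)

theorem CoveringBoundWith.quantErr_isBigO_rpow [NeZero P] (hK : CoveringBoundWith K d s)
    (hs : ∀ᵐ x ∂P, x ∈ s) (hd : 0 < d) :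
    quantErr P =O[atTop] fun n : ℕ ↦ (n : ℝ) ^ (-(2 / d)) := by
  refine IsBigO.of_bound (((K + 1 : ℝ≥0) : ℝ) ^ (2 / d) * P.real Set.univ) ?_
  filter_upwards [eventually_ge_atTop ⌈K + 1⌉₊] with n hn
  have hKn : K + 1 ≤ n := Nat.ceil_le.1 hn
  have hn_pos : (0 : ℝ≥0) < n := (by positivity : (0 : ℝ≥0) < K + 1).trans_le hKn
  set ε : ℝ≥0 := ((K + 1) / n) ^ d⁻¹ with hε
  have hε_le : ε ≤ 1 := NNReal.rpow_le_one ((div_le_one hn_pos).2 hKn) (by positivity)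
  obtain ⟨N, hfin, hcard, hcover⟩ := hK ε (NNReal.rpow_pos (by positivity)) hε_le
  have hNn : N.ncard ≤ n := by
    rw [← Nat.cast_le (α := ℝ≥0)]
    calc (N.ncard : ℝ≥0) ≤ K * ε ^ (-d) := hcard
      _ = K / (K + 1) * n := by
        rw [NNReal.rpow_neg, hε, NNReal.rpow_inv_rpow hd.ne', inv_div]; ring
      _ ≤ 1 * n := by gcongr; exact div_le_one_of_le₀ (by simp) zero_le
      _ = n := one_mul _
  rw [norm_of_nonneg (quantErr_nonneg P n), norm_of_nonneg (by positivity)]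
  calc quantErr P n ≤ (ε : ℝ) ^ 2 * P.real Set.univ := quantErr_le_of_isCover hs hcover hfin hNn
    _ = ((K + 1 : ℝ≥0) : ℝ) ^ (2 / d) * P.real Set.univ * (n : ℝ) ^ (-(2 / d)) := by
        rw [hε, coe_div_rpow_inv_sq, NNReal.coe_natCast]; ring

theorem tendsto_two_mul_log_div_neg_log_quantErr [NeZero P] (hd : 0 < d) (hP : FrostmanWith C d P)
    (hK : CoveringBoundWith K d s) (hs : ∀ᵐ x ∂P, x ∈ s) :
    Tendsto (fun n : ℕ ↦ 2 * log n / -log (quantErr P n)) atTop (𝓝 d) := by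
  obtain ⟨R, hR⟩ := hK.isBounded.exists_norm_le
  have hmom : MemLp id 2 P := MemLp.of_bound aestronglyMeasurable_id R (hs.mono hR)
  exact tendsto_two_mul_log_div_neg_log_of_isTheta hd
    ⟨hK.quantErr_isBigO_rpow hs hd, hP.rpow_isBigO_quantErr hmom hd⟩

end QuantizationError

section Hexagon

lemma hexL_induction {p : Set E2 → Prop} (hseg : ∀ a b, p (segment ℝ a b))
    (hunion : ∀ s t, p s → p t → p (s ∪ t)) : p hexL := by
  unfold hexL
  iterate 5 refine hunion _ _ ?_ (hseg _ _)
  exact hseg _ _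

lemma measurableSet_hexL : MeasurableSet hexL :=
  (hexL_induction (p := IsClosed)
    (fun a b ↦ convexHull_pair (𝕜 := ℝ) a b ▸ (Set.toFinite {a, b}).isClosed_convexHull ℝ)
    fun _ _ ↦ IsClosed.union).measurableSet

lemma hausdorffMeasure_hexL_ne_top : μH[1] hexL ≠ ∞ :=
  hexL_induction (p := fun s ↦ μH[1] s ≠ ∞) (fun _ _ ↦ by simp [edist_ne_top])
    fun _ _ ↦ measure_union_ne_top

lemma hausdorffMeasure_hexL_ne_zero : μH[1] hexL ≠ 0 := by
  have hsub : segment ℝ (pt 0 0) (pt 1 0) ⊆ hexL := fun _ hx ↦ .inl (.inl (.inl (.inl (.inl hx))))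
  have hne : pt 0 0 ≠ pt 1 0 := fun h ↦ by simpa [pt] using congrArg (· 0) h
  refine fun hzero ↦ hne (edist_eq_zero.1 ?_)
  rw [← hausdorffMeasure_segment]
  exact measure_mono_null hsub hzero

instance : IsFiniteMeasure hexP := by
  have : Fact (μH[1] hexL < ∞) := ⟨hausdorffMeasure_hexL_ne_top.lt_top⟩
  exact Measure.smul_finite _ (by simp)

instance : NeZero hexP := by
  refine ⟨fun h ↦ hausdorffMeasure_hexL_ne_zero ?_⟩
  simpa [hexP] using h

lemma ae_mem_hexL : ∀ᵐ x ∂hexP, x ∈ hexL :=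
  Measure.ae_smul_measure (ae_restrict_mem measurableSet_hexL) _

lemma exists_coveringBoundWith_hexL : ∃ K, CoveringBoundWith K 1 hexL :=
  hexL_induction (p := fun s ↦ ∃ K, CoveringBoundWith K 1 s) exists_coveringBoundWith_segment
    fun _ _ ⟨_, hs⟩ ⟨_, ht⟩ ↦ ⟨_, hs.union ht⟩

lemma exists_frostmanWith_hexP : ∃ C, FrostmanWith C 1 hexP := by
  obtain ⟨C, hC⟩ : ∃ C, FrostmanWith C 1 ((μH[1] : Measure E2).restrict hexL) :=
    hexL_induction (p := fun s ↦ ∃ C, FrostmanWith C 1 ((μH[1] : Measure E2).restrict s))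
      (fun a b ↦ ⟨_, frostmanWith_hausdorffMeasure_restrict_segment a b⟩)
      fun _ _ ⟨_, hs⟩ ⟨_, ht⟩ ↦ ⟨_, hs.restrict_union ht⟩
  exact ⟨_, hC.smul (by simp)⟩

end Hexagon

/-- The quantization dimension of the uniform distribution on the hexagon
boundary exists and equals `1`:
`lim_{n→∞} (2 log n)/(-log Vₙ(P)) = 1`. -/
theorem stmt_8 :
    Tendsto (fun n : ℕ => 2 * Real.log n / (-Real.log (quantErr hexP n)))
      atTop (nhds 1) := by
  obtain ⟨K, hK⟩ := exists_coveringBoundWith_hexL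
  obtain ⟨C, hC⟩ := exists_frostmanWith_hexP
  exact tendsto_two_mul_log_div_neg_log_quantErr one_pos hC hK ae_mem_hexL
end
end

section
/- Let P be the uniform probability distribution on the full unit circle S = {(cos θ, sin θ) : 0 ≤ θ ≤ 2π}. Then for every n ∈ ℕ the nth quantization error is Vₙ(P) = 1 − (n²/π²) sin²(π/n), and consequently the one-dimensional quantization coefficient of P equals π²/3, i.e., lim_{n→∞} n² Vₙ(P) = π²/3. -/
open MeasureTheory Real Filter
open scoped ENNReal

noncomputable section

/-- The arc `{(cos θ, sin θ) : a ≤ θ ≤ b}` of the unit circle. -/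
def arcS (a b : ℝ) : Set E2 :=
  {p | ∃ θ : ℝ, a ≤ θ ∧ θ ≤ b ∧ p = pt (Real.cos θ) (Real.sin θ)}

/-- The uniform probability distribution on the arc `arcS a b`: density
`1/(b-a)` with respect to one-dimensional Hausdorff (arc-length) measure. -/
def arcP (a b : ℝ) : Measure E2 :=
  (ENNReal.ofReal (b - a))⁻¹ • (μH[1] : Measure E2).restrict (arcS a b)

/-!
Arc length turns the quantization error of `α` into the average over `θ` of the squared distance
from `(cos θ, sin θ)` to `α`. A single centre at distance `r` from the origin that serves an arc of
length `2t` saves at most `2 (2 r sin t - r² t) ≤ 2 sin² t / t` of the total `2π`, so everything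
rests on a bound for `∑ sin² tᵢ / tᵢ` under `∑ tᵢ = π`. The function `sin² t / t` lies below an
affine function `A + B t` on `[0, π]` that touches it at `π / n`: it is concave on `[0, π / 2]`, and
beyond that it stays below the line `4 / π - 4 t / π²`, which meets it at `π / 2` and at `π`.

No partition into Voronoi arcs is needed: with `c = 1 - B`, the squared distance to `α` is at least
`c - ∑ a ∈ α, max (c - ‖x - a‖²) 0`, and each summand integrates to at most `2 A` over the circle.
The regular `n`-gon of circumradius `sinc (π / n)` attains the resulting bound
`1 - sinc² (π / n)`.
-/

/-! ### Hausdorff measure of curves -/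
lemma lipschitzOnWith_one_of_hasUnitSpeedOn {X : Type*} [PseudoEMetricSpace X] {f : ℝ → X}
    {s : Set ℝ} (hf : HasUnitSpeedOn f s) : LipschitzOnWith 1 f s := by
  intro x hx y hy
  wlog hxy : x ≤ y generalizing x y
  · rw [edist_comm, edist_comm x]
    exact this hy hx (le_of_not_ge hxy)
  calc edist (f x) (f y) ≤ eVariationOn f (s ∩ Set.Icc x y) :=
        eVariationOn.edist_le f ⟨hx, le_rfl, hxy⟩ ⟨hy, hxy, le_rfl⟩
    _ = (1 : NNReal) * edist x y := by
        rw [hf hx hy, edist_comm, edist_dist, Real.dist_eq, abs_of_nonneg (sub_nonneg.2 hxy)]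
        simp

section CurveHausdorffMeasure

variable {X : Type*} [MetricSpace X] [MeasurableSpace X] [BorelSpace X] {f : ℝ → X} {a b : ℝ}

lemma edist_le_hausdorffMeasure_image_Ico (hab : a ≤ b) (hf : ContinuousOn f (Set.Icc a b)) :
    edist (f b) (f a) ≤ μH[1] (f '' Set.Ico a b) := by
  have hIco : Set.Ico 0 (dist (f b) (f a)) ⊆ (dist · (f a)) '' (f '' Set.Ico a b) := by
    have hdist : ContinuousOn (fun x => dist (f x) (f a)) (Set.Icc a b) := by fun_prop
    simpa only [Set.image_image, dist_self] using intermediate_value_Ico hab hdist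
  calc edist (f b) (f a) = volume (Set.Ico 0 (dist (f b) (f a))) := by
        rw [Real.volume_Ico, sub_zero, edist_dist]
    _ ≤ μH[1] ((dist · (f a)) '' (f '' Set.Ico a b)) := by
        rw [hausdorffMeasure_real]
        exact measure_mono hIco
    _ ≤ μH[1] (f '' Set.Ico a b) := by
        simpa using (LipschitzWith.dist_left (f a)).hausdorffMeasure_image_le zero_le_one
          (f '' Set.Ico a b)

lemma eVariationOn_Icc_le_hausdorffMeasure_image_Ico (hf : ContinuousOn f (Set.Icc a b))
    (hinj : Set.InjOn f (Set.Ico a b)) :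
    eVariationOn f (Set.Icc a b) ≤ μH[1] (f '' Set.Ico a b) := by
  refine iSup_le ?_
  rintro ⟨n, u, hu, hmem⟩
  let piece (i : ℕ) : Set ℝ := Set.Ico (u i) (u (i + 1))
  have hpiece (i : ℕ) : piece i ⊆ Set.Ico a b :=
    Set.Ico_subset_Ico (hmem i).1 (hmem (i + 1)).2
  have hdisj : Pairwise (Function.onFun Disjoint fun i => f '' piece i) := fun i j hij =>
    (hu.pairwise_disjoint_on_Ico_succ hij).image hinj (hpiece i) (hpiece j)
  have hmeas (i : ℕ) : MeasurableSet (f '' piece i) :=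
    measurableSet_Ico.image_of_continuousOn_injOn
      (hf.mono ((hpiece i).trans Set.Ico_subset_Icc_self)) (hinj.mono (hpiece i))
  calc ∑ i ∈ Finset.range n, edist (f (u (i + 1))) (f (u i))
      ≤ ∑ i ∈ Finset.range n, μH[1] (f '' piece i) :=
        Finset.sum_le_sum fun i _ => edist_le_hausdorffMeasure_image_Ico (hu i.le_succ)
          (hf.mono (Set.Icc_subset_Icc (hmem i).1 (hmem (i + 1)).2))
    _ = μH[1] (⋃ i ∈ Finset.range n, f '' piece i) :=
        (measure_biUnion_finset (hdisj.set_pairwise _) fun i _ => hmeas i).symm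
    _ ≤ μH[1] (f '' Set.Ico a b) :=
        measure_mono (Set.iUnion₂_subset fun i _ => Set.image_mono (hpiece i))

lemma restrict_hausdorffMeasure_image_le_map {Y : Type*} [MetricSpace Y] [MeasurableSpace Y]
    [BorelSpace Y] {g : Y → X} {s : Set Y} {d : ℝ} (hd : 0 ≤ d) (hs : MeasurableSet s)
    (hg : LipschitzOnWith 1 g s) :
    (μH[d] : Measure X).restrict (g '' s) ≤ ((μH[d] : Measure Y).restrict s).map g := by
  have hmeas : AEMeasurable g ((μH[d] : Measure Y).restrict s) :=
    hg.continuousOn.aemeasurable hs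
  refine Measure.le_iff.2 fun B hB => ?_
  calc (μH[d] : Measure X).restrict (g '' s) B = μH[d] (g '' (g ⁻¹' B ∩ s)) := by
        rw [Measure.restrict_apply hB, Set.image_preimage_inter]
    _ ≤ μH[d] (g ⁻¹' B ∩ s) := by
        simpa using (hg.mono Set.inter_subset_right).hausdorffMeasure_image_le hd
    _ = ((μH[d] : Measure Y).restrict s).map g B := by
        rw [Measure.map_apply_of_aemeasurable hmeas hB, Measure.restrict_apply' hs]

theorem restrict_hausdorffMeasure_image_Ico_of_hasUnitSpeedOn
    (hf : HasUnitSpeedOn f (Set.Icc a b)) (hinj : Set.InjOn f (Set.Ico a b)) :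
    (μH[1] : Measure X).restrict (f '' Set.Ico a b) = (volume.restrict (Set.Ico a b)).map f := by
  rcases lt_or_ge b a with hba | hab
  · simp [Set.Ico_eq_empty hba.not_gt]
  have hlip := lipschitzOnWith_one_of_hasUnitSpeedOn hf
  have hlipIco := hlip.mono Set.Ico_subset_Icc_self
  have hle := restrict_hausdorffMeasure_image_le_map zero_le_one measurableSet_Ico hlipIco
  rw [hausdorffMeasure_real] at hle
  have : IsFiniteMeasure ((μH[1] : Measure X).restrict (f '' Set.Ico a b)) :=
    isFiniteMeasure_of_le _ hle
  -- A measure below a finite one of the same total mass equals it.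
  refine Measure.eq_of_le_of_measure_univ_eq hle (le_antisymm (hle _) ?_)
  calc (volume.restrict (Set.Ico a b)).map f Set.univ
      = eVariationOn f (Set.Icc a b) := by
        have hlength := hf (Set.left_mem_Icc.2 hab) (Set.right_mem_Icc.2 hab)
        rw [Set.inter_self, NNReal.coe_one, one_mul] at hlength
        rw [hlength, Measure.map_apply_of_aemeasurable
          (hlipIco.continuousOn.aemeasurable measurableSet_Ico) .univ]
        simp
    _ ≤ (μH[1] : Measure X).restrict (f '' Set.Ico a b) Set.univ := by
        rw [Measure.restrict_apply_univ]
        exact eVariationOn_Icc_le_hausdorffMeasure_image_Ico hlip.continuousOn hinj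

end CurveHausdorffMeasure

/-! ### Arc length on the unit circle -/
/-- The point of the unit circle at angle `θ`; the arcs `arcS a b` are parametrized by it. -/
def circlePoint (θ : ℝ) : E2 := pt (cos θ) (sin θ)

@[fun_prop]
lemma continuous_circlePoint : Continuous circlePoint := by
  unfold circlePoint pt
  fun_prop

lemma periodic_circlePoint : Function.Periodic circlePoint (2 * π) := fun θ => by
  simp [circlePoint]

lemma inner_circlePoint_circlePoint (θ φ : ℝ) :
    inner ℝ (circlePoint θ) (circlePoint φ) = cos (θ - φ) := by
  simp [circlePoint, pt, PiLp.inner_apply, cos_sub, mul_comm]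

lemma norm_circlePoint (θ : ℝ) : ‖circlePoint θ‖ = 1 := by
  rw [norm_eq_sqrt_real_inner, inner_circlePoint_circlePoint, sub_self, cos_zero, sqrt_one]

lemma norm_circlePoint_sub_smul_sq (r θ φ : ℝ) :
    ‖circlePoint θ - r • circlePoint φ‖ ^ 2 = 1 + r ^ 2 - 2 * r * cos (θ - φ) := by
  rw [norm_sub_sq_real, inner_smul_right, inner_circlePoint_circlePoint, norm_smul,
    norm_circlePoint, norm_circlePoint, Real.norm_eq_abs, mul_one, sq_abs]
  ring

lemma dist_circlePoint (θ φ : ℝ) :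
    dist (circlePoint θ) (circlePoint φ) = 2 * |sin ((θ - φ) / 2)| := by
  refine (pow_left_inj₀ dist_nonneg (by positivity) two_ne_zero).1 ?_
  have hnorm := norm_circlePoint_sub_smul_sq 1 θ φ
  rw [one_smul] at hnorm
  rw [dist_eq_norm, hnorm, mul_pow, sq_abs, sin_sq_eq_half_sub, mul_div_cancel₀ _ two_ne_zero]
  ring

lemma exists_eq_smul_circlePoint (x : E2) : ∃ r φ : ℝ, 0 ≤ r ∧ x = r • circlePoint φ := by
  refine ⟨‖(⟨x 0, x 1⟩ : ℂ)‖, Complex.arg ⟨x 0, x 1⟩, norm_nonneg _, ?_⟩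
  ext i
  fin_cases i
  · simp [circlePoint, pt]
  · simp [circlePoint, pt]

lemma injOn_circlePoint_Ico {a b : ℝ} (hab : b ≤ a + 2 * π) :
    Set.InjOn circlePoint (Set.Ico a b) := by
  intro x hx y hy hxy
  have hsin : sin ((x - y) / 2) = 0 := by
    simpa [hxy] using dist_circlePoint x y
  rw [sin_eq_zero_iff_of_lt_of_lt (by linarith [hx.1, hy.2]) (by linarith [hx.2, hy.1])] at hsin
  linarith

lemma lipschitzWith_circlePoint : LipschitzWith 1 circlePoint := by
  refine LipschitzWith.of_dist_le_mul fun x y => ?_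
  have hsin : |sin ((x - y) / 2)| ≤ |x - y| / 2 := by
    simpa [abs_div] using abs_sin_le_abs (x := (x - y) / 2)
  rw [dist_circlePoint, Real.dist_eq, NNReal.coe_one]
  linarith

lemma sin_eq_mul_sinc (x : ℝ) : sin x = x * sinc x := by
  rcases eq_or_ne x 0 with rfl | hx
  · simp
  · rw [sinc_of_ne_zero hx, mul_div_cancel₀ _ hx]

lemma ofReal_mul_abs_sinc_le_eVariationOn_circlePoint {a b : ℝ} (hab : a ≤ b) {n : ℕ}
    (hn : n ≠ 0) :
    ENNReal.ofReal ((b - a) * |sinc ((b - a) / (2 * n))|) ≤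
      eVariationOn circlePoint (Set.Icc a b) := by
  have hn0 : (n : ℝ) ≠ 0 := Nat.cast_ne_zero.2 hn
  let u (i : ℕ) : ℝ := a + i * ((b - a) / n)
  have hstep : 0 ≤ (b - a) / n := div_nonneg (sub_nonneg.2 hab) n.cast_nonneg
  have hu : Monotone u := fun i j hij =>
    add_le_add le_rfl (mul_le_mul_of_nonneg_right (Nat.cast_le.2 hij) hstep)
  have hmem : ∀ i ∈ Set.Iic n, u i ∈ Set.Icc a b := fun i hi => by
    have h0 : u 0 = a := by simp [u]
    have h1 : u n = b := by
      simp only [u]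
      field_simp
      ring
    exact ⟨h0 ▸ hu i.zero_le, h1 ▸ hu hi⟩
  have hchord (i : ℕ) : edist (circlePoint (u (i + 1))) (circlePoint (u i)) =
      ENNReal.ofReal (2 * |sin ((b - a) / (2 * n))|) := by
    rw [edist_dist, dist_circlePoint]
    congr 4
    simp only [u]
    push_cast
    field_simp
    ring
  calc ENNReal.ofReal ((b - a) * |sinc ((b - a) / (2 * n))|)
      = ∑ i ∈ Finset.range n, edist (circlePoint (u (i + 1))) (circlePoint (u i)) := by
        simp only [hchord, Finset.sum_const, Finset.card_range, ← ENNReal.ofReal_nsmul]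
        have harg : 0 ≤ (b - a) / (2 * n) := div_nonneg (sub_nonneg.2 hab) (by positivity)
        rw [sin_eq_mul_sinc, abs_mul, abs_of_nonneg harg, nsmul_eq_mul]
        field_simp
    _ ≤ eVariationOn circlePoint (Set.Icc a b) :=
        eVariationOn.sum_le_of_monotoneOn_Iic (hu.monotoneOn _) hmem

lemma eVariationOn_circlePoint_Icc (a b : ℝ) :
    eVariationOn circlePoint (Set.Icc a b) = ENNReal.ofReal (b - a) := by
  rcases lt_or_ge b a with hba | hab
  · simp [Set.Icc_eq_empty hba.not_ge, hba.le]
  refine le_antisymm ?_ ?_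
  · calc eVariationOn circlePoint (Set.Icc a b) ≤ (1 : NNReal) * eVariationOn id (Set.Icc a b) :=
          lipschitzWith_circlePoint.lipschitzOnWith.comp_eVariationOn_le (Set.mapsTo_univ _ _)
      _ ≤ ENNReal.ofReal (b - a) := by
          simp
  · have hsinc : Tendsto (fun n : ℕ => (b - a) * |sinc ((b - a) / (2 * n))|) atTop
        (nhds (b - a)) := by
      have harg : Tendsto (fun n : ℕ => (b - a) / (2 * n)) atTop (nhds 0) := by
        simpa only [div_div] using tendsto_const_div_atTop_nhds_zero_nat ((b - a) / 2)
      simpa using ((continuous_sinc.tendsto 0).comp harg).abs.const_mul (b - a)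
    refine le_of_tendsto (ENNReal.tendsto_ofReal hsinc) ?_
    filter_upwards [eventually_ne_atTop 0] with n hn
    exact ofReal_mul_abs_sinc_le_eVariationOn_circlePoint hab hn

lemma hasUnitSpeedOn_circlePoint_Icc (a b : ℝ) : HasUnitSpeedOn circlePoint (Set.Icc a b) := by
  intro x hx y hy
  rw [Set.inter_eq_right.2 (Set.Icc_subset_Icc hx.1 hy.2), eVariationOn_circlePoint_Icc,
    NNReal.coe_one, one_mul]

lemma arcS_eq_image (a b : ℝ) : arcS a b = circlePoint '' Set.Icc a b := by
  ext p
  simp only [arcS, circlePoint, Set.mem_image, Set.mem_Icc, Set.mem_ofPred_eq, and_assoc, eq_comm]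

theorem restrict_hausdorffMeasure_arcS {a b : ℝ} (hab : b ≤ a + 2 * π) :
    (μH[1] : Measure E2).restrict (arcS a b) =
      (volume.restrict (Set.Ico a b)).map circlePoint := by
  have : NullSingletonClass (μH[1] : Measure E2) := Measure.nullSingletonClass_hausdorff _ one_pos
  have hIco : circlePoint '' Set.Ico a b =ᵐ[μH[1]] arcS a b := by
    rw [arcS_eq_image]
    rcases lt_or_ge b a with hba | hab
    · rw [Set.Ico_eq_empty hba.not_gt, Set.Icc_eq_empty hba.not_ge]
      exact EventuallyEq.rfl
    · rw [← Set.Ico_insert_right hab, Set.image_insert_eq]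
      exact (insert_ae_eq_self _ _).symm
  rw [← Measure.restrict_congr_set hIco]
  exact restrict_hausdorffMeasure_image_Ico_of_hasUnitSpeedOn
    (hasUnitSpeedOn_circlePoint_Icc a b) (injOn_circlePoint_Ico hab)

lemma integral_arcP {a b : ℝ} (hab : a ≤ b) (hba : b ≤ a + 2 * π) {F : E2 → ℝ}
    (hF : StronglyMeasurable F) :
    ∫ x, F x ∂arcP a b = (b - a)⁻¹ * ∫ θ in a..b, F (circlePoint θ) := by
  rw [arcP, restrict_hausdorffMeasure_arcS hba, integral_smul_measure,
    integral_map continuous_circlePoint.aemeasurable hF.aestronglyMeasurable,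
    integral_Ico_eq_integral_Ioc, ← intervalIntegral.integral_of_le hab, ENNReal.toReal_inv,
    ENNReal.toReal_ofReal (sub_nonneg.2 hab), smul_eq_mul]

/-! ### Affine majorants of `sin² t / t` -/

lemma le_tangent_of_concaveOn {S : Set ℝ} {f : ℝ → ℝ} {f' x y : ℝ} (hf : ConcaveOn ℝ S f)
    (hx : x ∈ S) (hy : y ∈ S) (hf' : HasDerivAt f f' x) : f y ≤ f x + f' * (y - x) := by
  rcases lt_trichotomy x y with hxy | rfl | hyx
  · have hslope := hf.slope_le_of_hasDerivAt hx hy hxy hf'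
    rw [slope_def_field, div_le_iff₀ (sub_pos.2 hxy)] at hslope
    linarith
  · simp
  · have hslope := hf.le_slope_of_hasDerivAt hy hx hyx hf'
    rw [slope_def_field, le_div_iff₀ (sub_pos.2 hyx)] at hslope
    linarith

lemma sin_le_tangent {x y : ℝ} (hx : x ∈ Set.Icc 0 π) (hy : y ∈ Set.Icc 0 π) :
    sin y ≤ sin x + cos x * (y - x) :=
  le_tangent_of_concaveOn strictConcaveOn_sin_Icc.concaveOn hx hy (hasDerivAt_sin x)

lemma sin_sq_eq_mul_integral (t : ℝ) : sin t ^ 2 = t * ∫ s in (0 : ℝ)..1, sin (2 * t * s) := by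
  have hint : 2 * t * ∫ s in (0 : ℝ)..1, sin (2 * t * s) = 1 - cos (2 * t) := by
    rw [intervalIntegral.mul_integral_comp_mul_left, integral_sin, mul_zero, mul_one, cos_zero]
  rw [sin_sq_eq_half_sub]
  linarith

lemma sin_sq_le_mul_sub {t : ℝ} (ht : t ∈ Set.Icc 0 π) :
    sin t ^ 2 ≤ t * (4 / π - 4 / π ^ 2 * t) := by
  have hcos : cos (π - 2 * t) ≤ 1 - 2 / π ^ 2 * (π - 2 * t) ^ 2 :=
    cos_le_one_sub_mul_cos_sq (abs_le.2 ⟨by linarith [ht.2], by linarith [ht.1]⟩)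
  rw [cos_pi_sub] at hcos
  calc sin t ^ 2 = (1 + -cos (2 * t)) / 2 := by
        rw [sin_sq_eq_half_sub]
        ring
    _ ≤ (1 + (1 - 2 / π ^ 2 * (π - 2 * t) ^ 2)) / 2 := by gcongr
    _ = t * (4 / π - 4 / π ^ 2 * t) := by
        field_simp
        ring

-- `sin² t / t = ∫ sin (2 t s) ds` averages functions concave in `t`, so their tangents average too.
lemma exists_sin_sq_le_mul_affine_Icc_pi_div_two {τ : ℝ} (hτ : τ ∈ Set.Icc 0 (π / 2)) :
    ∃ A B : ℝ, 0 ≤ A ∧ sin τ ^ 2 = τ * (A + B * τ) ∧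
      ∀ t ∈ Set.Icc 0 (π / 2), sin t ^ 2 ≤ t * (A + B * t) := by
  let B := ∫ s in (0 : ℝ)..1, cos (2 * τ * s) * (2 * s)
  let A := (∫ s in (0 : ℝ)..1, sin (2 * τ * s)) - B * τ
  have hangle {x s : ℝ} (hx : x ∈ Set.Icc 0 (π / 2)) (hs : s ∈ Set.Icc (0 : ℝ) 1) :
      2 * x * s ∈ Set.Icc 0 π :=
    ⟨mul_nonneg (mul_nonneg zero_le_two hx.1) hs.1, by nlinarith [hx.1, hx.2, hs.1, hs.2]⟩
  have htangent {t : ℝ} (ht : t ∈ Set.Icc 0 (π / 2)) :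
      ∫ s in (0 : ℝ)..1, sin (2 * t * s) ≤ A + B * t := by
    calc ∫ s in (0 : ℝ)..1, sin (2 * t * s)
        ≤ ∫ s in (0 : ℝ)..1, sin (2 * τ * s) + cos (2 * τ * s) * (2 * s) * (t - τ) := by
          refine intervalIntegral.integral_mono_on zero_le_one
            (Continuous.intervalIntegrable (by fun_prop) _ _)
            (Continuous.intervalIntegrable (by fun_prop) _ _) fun s hs => ?_
          exact (sin_le_tangent (hangle hτ hs) (hangle ht hs)).trans_eq (by ring)
      _ = A + B * t := by
          rw [intervalIntegral.integral_add (Continuous.intervalIntegrable (by fun_prop) _ _)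
            (Continuous.intervalIntegrable (by fun_prop) _ _), intervalIntegral.integral_mul_const]
          ring
  refine ⟨A, B, ?_, ?_, fun t ht => ?_⟩
  · simpa using htangent (t := 0) ⟨le_rfl, pi_div_two_pos.le⟩
  · rw [sub_add_cancel, sin_sq_eq_mul_integral]
  · rw [sin_sq_eq_mul_integral]
    exact mul_le_mul_of_nonneg_left (htangent ht) ht.1

lemma exists_sin_sq_le_mul_affine_of_lt_pi_div_two {τ : ℝ} (hτ : τ ∈ Set.Ioo 0 (π / 2)) :
    ∃ A B : ℝ, 0 ≤ A ∧ sin τ ^ 2 = τ * (A + B * τ) ∧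
      ∀ t ∈ Set.Icc 0 π, sin t ^ 2 ≤ t * (A + B * t) := by
  obtain ⟨A, B, hA, heq, hle⟩ := exists_sin_sq_le_mul_affine_Icc_pi_div_two
    (Set.Ioo_subset_Icc_self hτ)
  refine ⟨A, B, hA, heq, fun t ht => ?_⟩
  rcases le_total t (π / 2) with ht2 | ht2
  · exact hle t ⟨ht.1, ht2⟩
  have hτ_le : A + B * τ ≤ 4 / π - 4 / π ^ 2 * τ := by
    refine le_of_mul_le_mul_left ?_ hτ.1
    rw [← heq]
    exact sin_sq_le_mul_sub ⟨hτ.1.le, by linarith [hτ.2, pi_pos]⟩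
  have hhalf_ge : 4 / π - 4 / π ^ 2 * (π / 2) ≤ A + B * (π / 2) := by
    refine le_of_mul_le_mul_left ?_ pi_div_two_pos
    calc π / 2 * (4 / π - 4 / π ^ 2 * (π / 2)) = sin (π / 2) ^ 2 := by
          rw [sin_pi_div_two]
          field_simp
          norm_num
      _ ≤ π / 2 * (A + B * (π / 2)) := hle _ ⟨pi_div_two_pos.le, le_rfl⟩
  have hslope : -(4 / π ^ 2) ≤ B := by
    refine le_of_mul_le_mul_right ?_ (sub_pos.2 hτ.2)
    linarith
  refine (sin_sq_le_mul_sub ht).trans (mul_le_mul_of_nonneg_left ?_ ht.1)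
  nlinarith [mul_nonneg (sub_nonneg.2 ht2) (neg_le_iff_add_nonneg.1 hslope)]

lemma exists_sin_sq_le_mul_affine_pi_div {n : ℕ} (hn : n ≠ 0) :
    ∃ A B : ℝ, 0 ≤ A ∧ sin (π / n) ^ 2 = π / n * (A + B * (π / n)) ∧
      ∀ t ∈ Set.Icc 0 π, sin t ^ 2 ≤ t * (A + B * t) := by
  rcases lt_or_ge 2 n with hn2 | hn2
  · have hn2' : (2 : ℝ) < n := by exact_mod_cast hn2
    exact exists_sin_sq_le_mul_affine_of_lt_pi_div_two
      ⟨by positivity, div_lt_div_of_pos_left pi_pos two_pos hn2'⟩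
  · refine ⟨4 / π, -(4 / π ^ 2), by positivity, ?_,
      fun t ht => (sin_sq_le_mul_sub ht).trans_eq (by ring)⟩
    interval_cases n
    · contradiction
    · rw [Nat.cast_one, div_one, sin_pi]
      field_simp
      norm_num
    · rw [Nat.cast_two, sin_pi_div_two]
      field_simp
      norm_num

/-! ### The contribution of one centre -/

lemma exists_integral_max_zero_eq_of_antitoneOn {f : ℝ → ℝ} {a b : ℝ} (hab : a ≤ b)
    (hf : ContinuousOn f (Set.Icc a b)) (hanti : AntitoneOn f (Set.Icc a b)) :
    ∃ t ∈ Set.Icc a b, ∫ x in a..b, max (f x) 0 = ∫ x in a..t, f x := by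
  obtain ⟨t, ht, hnonneg, hnonpos⟩ : ∃ t ∈ Set.Icc a b,
      (∀ x ∈ Set.Ioc a t, 0 ≤ f x) ∧ ∀ x ∈ Set.Ioc t b, f x ≤ 0 := by
    have hamem := Set.left_mem_Icc.2 hab
    have hbmem := Set.right_mem_Icc.2 hab
    rcases le_total (f a) 0 with hfa | hfa
    · exact ⟨a, hamem, by simp, fun x hx =>
        (hanti hamem (Set.Ioc_subset_Icc_self hx) hx.1.le).trans hfa⟩
    rcases le_total 0 (f b) with hfb | hfb
    · exact ⟨b, hbmem, fun x hx =>
        hfb.trans (hanti (Set.Ioc_subset_Icc_self hx) hbmem hx.2), by simp⟩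
    obtain ⟨t, ht, hft⟩ := intermediate_value_Icc' hab hf ⟨hfb, hfa⟩
    exact ⟨t, ht, fun x hx => hft ▸ hanti ⟨hx.1.le, hx.2.trans ht.2⟩ ht hx.2,
      fun x hx => hft ▸ hanti ht ⟨ht.1.trans hx.1.le, hx.2⟩ hx.1.le⟩
  have hmax : ContinuousOn (fun x => max (f x) 0) (Set.Icc a b) := hf.sup continuousOn_const
  refine ⟨t, ht, ?_⟩
  rw [← intervalIntegral.integral_add_adjacent_intervals
    ((hmax.mono (Set.Icc_subset_Icc_right ht.2)).intervalIntegrable_of_Icc ht.1)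
    ((hmax.mono (Set.Icc_subset_Icc_left ht.1)).intervalIntegrable_of_Icc ht.2)]
  have hleft : ∫ x in a..t, max (f x) 0 = ∫ x in a..t, f x :=
    intervalIntegral.integral_congr_ae <| .of_forall fun x hx =>
      max_eq_left (hnonneg x (Set.uIoc_of_le ht.1 ▸ hx))
  have hright : ∫ x in t..b, max (f x) 0 = 0 :=
    intervalIntegral.integral_zero_ae <| .of_forall fun x hx =>
      max_eq_right (hnonpos x (Set.uIoc_of_le ht.2 ▸ hx))
  rw [hleft, hright, add_zero]

lemma integral_neg_self_eq_two_mul_of_even {f : ℝ → ℝ} (hf : Continuous f) (heven : Function.Even f)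
    (b : ℝ) : ∫ x in -b..b, f x = 2 * ∫ x in 0..b, f x := by
  rw [← intervalIntegral.integral_add_adjacent_intervals (hf.intervalIntegrable _ 0)
    (hf.intervalIntegrable 0 _)]
  have hneg : ∫ x in -b..0, f x = ∫ x in 0..b, f x := by
    simpa [heven _] using (intervalIntegral.integral_comp_neg f (a := -b) (b := 0))
  rw [hneg, two_mul]

lemma exists_integral_max_mul_cos_sub_eq {p : ℝ} (hp : 0 ≤ p) (q : ℝ) :
    ∃ t ∈ Set.Icc 0 π, ∫ x in -π..π, max (p * cos x - q) 0 = 2 * (p * sin t - q * t) := by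
  have hanti : AntitoneOn (fun x => p * cos x - q) (Set.Icc 0 π) := fun x hx y hy hxy =>
    sub_le_sub_right (mul_le_mul_of_nonneg_left (antitoneOn_cos hx hy hxy) hp) q
  obtain ⟨t, ht, hint⟩ :=
    exists_integral_max_zero_eq_of_antitoneOn pi_nonneg (by fun_prop) hanti
  refine ⟨t, ht, ?_⟩
  rw [integral_neg_self_eq_two_mul_of_even (by fun_prop) (fun x => by simp), hint,
    intervalIntegral.integral_sub (Continuous.intervalIntegrable (by fun_prop) _ _)
      (Continuous.intervalIntegrable (by fun_prop) _ _)]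
  simp [mul_comm]

lemma integral_max_sub_norm_sq_circlePoint_le {A B : ℝ} (hA : 0 ≤ A)
    (hAB : ∀ t ∈ Set.Icc 0 π, sin t ^ 2 ≤ t * (A + B * t)) (x : E2) :
    ∫ θ in 0..2 * π, max (1 - B - ‖circlePoint θ - x‖ ^ 2) 0 ≤ 2 * A := by
  obtain ⟨r, φ, hr, rfl⟩ := exists_eq_smul_circlePoint x
  obtain ⟨t, ht, hint⟩ := exists_integral_max_mul_cos_sub_eq (mul_nonneg zero_le_two hr) (r ^ 2 + B)
  let f (x : ℝ) : ℝ := max (2 * r * cos x - (r ^ 2 + B)) 0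
  have hf : Function.Periodic f (2 * π) := fun x => by simp only [f, cos_add_two_pi]
  calc ∫ θ in 0..2 * π, max (1 - B - ‖circlePoint θ - r • circlePoint φ‖ ^ 2) 0
      = ∫ θ in 0..2 * π, f (θ - φ) := by
        refine intervalIntegral.integral_congr fun θ _ => ?_
        simp only [f, norm_circlePoint_sub_smul_sq]
        ring_nf
    _ = ∫ θ in -π..π, f θ := by
        rw [intervalIntegral.integral_comp_sub_right]
        convert hf.intervalIntegral_add_eq (0 - φ) (-π) using 2 <;> ring
    _ = 2 * (2 * r * sin t - (r ^ 2 + B) * t) := hint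
    _ ≤ 2 * A := by
        refine mul_le_mul_of_nonneg_left ?_ zero_le_two
        rcases ht.1.eq_or_lt with rfl | htpos
        · simpa using hA
        · refine le_of_mul_le_mul_left ?_ htpos
          nlinarith [hAB t ht, sq_nonneg (r * t - sin t)]

/-! ### Optimal quantizers -/

/-- The squared distance from `x` to the nearest point of `α`, in the form in which it is
integrated in `quantErr`. It has the junk value `0` for `α = ∅`. -/
def infSqDist {E : Type*} [NormedAddCommGroup E] (α : Set E) (x : E) : ℝ :=
  sInf ((fun a => ‖x - a‖ ^ 2) '' α)

section InfSqDist

variable {E : Type*} [NormedAddCommGroup E]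

lemma infSqDist_le {α : Set E} {a : E} (ha : a ∈ α) (x : E) : infSqDist α x ≤ ‖x - a‖ ^ 2 :=
  csInf_le ⟨0, Set.forall_mem_image.2 fun _ _ => by positivity⟩ (Set.mem_image_of_mem _ ha)

lemma continuous_infSqDist {α : Finset E} (hα : α.Nonempty) :
    Continuous (infSqDist (α : Set E)) := by
  have hinf : infSqDist (α : Set E) = fun x => α.inf' hα fun a => ‖x - a‖ ^ 2 :=
    funext fun x => (α.inf'_eq_csInf_image hα _).symm
  rw [hinf]
  exact Continuous.finset_inf'_apply hα fun a _ => by fun_prop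

lemma sub_sum_max_le_infSqDist {α : Finset E} (hα : α.Nonempty) (c : ℝ) (x : E) :
    c - ∑ a ∈ α, max (c - ‖x - a‖ ^ 2) 0 ≤ infSqDist (α : Set E) x := by
  refine le_csInf (hα.to_set.image _) (Set.forall_mem_image.2 fun a ha => ?_)
  have hsingle : max (c - ‖x - a‖ ^ 2) 0 ≤ ∑ a ∈ α, max (c - ‖x - a‖ ^ 2) 0 :=
    Finset.single_le_sum (f := fun a => max (c - ‖x - a‖ ^ 2) 0) (fun _ _ => le_max_right _ _) ha
  linarith [le_max_left (c - ‖x - a‖ ^ 2) 0]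

end InfSqDist

theorem two_pi_mul_le_integral_infSqDist_circlePoint {n : ℕ} (hn : n ≠ 0) {α : Finset E2}
    (hα : α.Nonempty) (hcard : α.card ≤ n) :
    2 * π * (1 - sinc (π / n) ^ 2) ≤
      ∫ θ in 0..2 * π, infSqDist (α : Set E2) (circlePoint θ) := by
  obtain ⟨A, B, hA, htouch, hAB⟩ := exists_sin_sq_le_mul_affine_pi_div hn
  have hAB_eq : n * A + π * B = π * sinc (π / n) ^ 2 := by
    rw [sin_eq_mul_sinc] at htouch
    field_simp at htouch ⊢
    linarith
  have hcap (a : E2) :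
      IntervalIntegrable (fun θ => max (1 - B - ‖circlePoint θ - a‖ ^ 2) 0) volume 0 (2 * π) :=
    Continuous.intervalIntegrable (by fun_prop) _ _
  have hsum : ∑ a ∈ α, ∫ θ in 0..2 * π, max (1 - B - ‖circlePoint θ - a‖ ^ 2) 0 ≤ n * (2 * A) :=
    calc ∑ a ∈ α, ∫ θ in 0..2 * π, max (1 - B - ‖circlePoint θ - a‖ ^ 2) 0
        ≤ ∑ _a ∈ α, 2 * A :=
          Finset.sum_le_sum fun a _ => integral_max_sub_norm_sq_circlePoint_le hA hAB a
      _ = α.card * (2 * A) := by rw [Finset.sum_const, nsmul_eq_mul]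
      _ ≤ n * (2 * A) := by gcongr
  calc 2 * π * (1 - sinc (π / n) ^ 2)
      = 2 * π * (1 - B) - n * (2 * A) := by linarith
    _ ≤ 2 * π * (1 - B) - ∑ a ∈ α, ∫ θ in 0..2 * π, max (1 - B - ‖circlePoint θ - a‖ ^ 2) 0 := by
        gcongr
    _ = ∫ θ in 0..2 * π, (1 - B - ∑ a ∈ α, max (1 - B - ‖circlePoint θ - a‖ ^ 2) 0) := by
        rw [intervalIntegral.integral_sub intervalIntegrable_const
          (Continuous.intervalIntegrable (by fun_prop) _ _),
          intervalIntegral.integral_finsetSum fun a _ => hcap a,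
          intervalIntegral.integral_const, smul_eq_mul, sub_zero]
    _ ≤ ∫ θ in 0..2 * π, infSqDist (α : Set E2) (circlePoint θ) :=
        intervalIntegral.integral_mono_on two_pi_pos.le
          (Continuous.intervalIntegrable (by fun_prop) _ _)
          (((continuous_infSqDist hα).comp continuous_circlePoint).intervalIntegrable _ _)
          fun θ _ => sub_sum_max_le_infSqDist hα _ _

/-- The vertices of a regular `n`-gon with circumradius `|r|`, centred at the origin. -/
def regularPolygon (n : ℕ) (r : ℝ) : Finset E2 :=
  (Finset.range n).image fun k : ℕ => r • circlePoint (2 * k * (π / n))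

lemma card_regularPolygon_le (n : ℕ) (r : ℝ) : (regularPolygon n r).card ≤ n :=
  Finset.card_image_le.trans_eq (Finset.card_range n)

lemma nonempty_regularPolygon {n : ℕ} (hn : n ≠ 0) (r : ℝ) : (regularPolygon n r).Nonempty :=
  (Finset.nonempty_range_iff.2 hn).image _

lemma integral_norm_circlePoint_sub_smul_sq (r φ τ : ℝ) :
    ∫ θ in φ - τ..φ + τ, ‖circlePoint θ - r • circlePoint φ‖ ^ 2 =
      2 * τ * (1 + r ^ 2) - 4 * r * sin τ := by
  simp only [norm_circlePoint_sub_smul_sq]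
  rw [intervalIntegral.integral_comp_sub_right fun x => 1 + r ^ 2 - 2 * r * cos x,
    intervalIntegral.integral_sub intervalIntegrable_const
      (Continuous.intervalIntegrable (by fun_prop) _ _),
    intervalIntegral.integral_const, intervalIntegral.integral_const_mul, integral_cos,
    add_sub_cancel_left, sub_sub_cancel_left, sin_neg, smul_eq_mul]
  ring

lemma integral_eq_sum_integral_of_periodic {f : ℝ → ℝ} (hf : Continuous f) {n : ℕ} {τ : ℝ}
    (hperiodic : Function.Periodic f (2 * n * τ)) :
    ∫ θ in 0..2 * n * τ, f θ =
      ∑ k ∈ Finset.range n, ∫ θ in 2 * k * τ - τ..2 * k * τ + τ, f θ := by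
  let cut (k : ℕ) : ℝ := 2 * k * τ - τ
  have hcut (k : ℕ) : cut (k + 1) = 2 * k * τ + τ := by
    simp only [cut]
    push_cast
    ring
  calc ∫ θ in 0..2 * n * τ, f θ = ∫ θ in cut 0..cut n, f θ := by
        convert hperiodic.intervalIntegral_add_eq 0 (cut 0) using 2
        · rw [zero_add]
        · simp only [cut]
          push_cast
          ring
    _ = ∑ k ∈ Finset.range n, ∫ θ in cut k..cut (k + 1), f θ :=
        (intervalIntegral.sum_integral_adjacent_intervals fun k _ =>
          hf.intervalIntegrable _ _).symm
    _ = ∑ k ∈ Finset.range n, ∫ θ in 2 * k * τ - τ..2 * k * τ + τ, f θ := by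
        simp only [hcut, cut]

theorem integral_infSqDist_regularPolygon_le {n : ℕ} (hn : n ≠ 0) (r : ℝ) :
    ∫ θ in 0..2 * π, infSqDist (regularPolygon n r : Set E2) (circlePoint θ) ≤
      2 * π * (1 + r ^ 2 - 2 * r * sinc (π / n)) := by
  set τ := π / n
  have hτ : 0 ≤ τ := by positivity
  have hperiod : 2 * π = 2 * n * τ := by
    rw [mul_assoc, mul_div_cancel₀ _ (Nat.cast_ne_zero.2 hn)]
  let f (θ : ℝ) : ℝ := infSqDist (regularPolygon n r : Set E2) (circlePoint θ)
  have hf : Continuous f :=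
    (continuous_infSqDist (nonempty_regularPolygon hn r)).comp continuous_circlePoint
  have hperiodic : Function.Periodic f (2 * n * τ) :=
    hperiod ▸ periodic_circlePoint.comp (infSqDist (regularPolygon n r : Set E2))
  have hpiece (k : ℕ) (hk : k ∈ Finset.range n) :
      ∫ θ in 2 * k * τ - τ..2 * k * τ + τ, f θ ≤ 2 * τ * (1 + r ^ 2) - 4 * r * sin τ := by
    rw [← integral_norm_circlePoint_sub_smul_sq r (2 * k * τ) τ]
    refine intervalIntegral.integral_mono_on (by linarith) (hf.intervalIntegrable _ _)
      (Continuous.intervalIntegrable (by fun_prop) _ _) fun θ _ => ?_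
    exact infSqDist_le (Finset.mem_coe.2 (Finset.mem_image_of_mem _ hk)) _
  calc ∫ θ in 0..2 * π, f θ
      = ∑ k ∈ Finset.range n, ∫ θ in 2 * k * τ - τ..2 * k * τ + τ, f θ := by
        rw [hperiod, integral_eq_sum_integral_of_periodic hf hperiodic]
    _ ≤ ∑ _k ∈ Finset.range n, (2 * τ * (1 + r ^ 2) - 4 * r * sin τ) := Finset.sum_le_sum hpiece
    _ = 2 * π * (1 + r ^ 2 - 2 * r * sinc τ) := by
        rw [Finset.sum_const, Finset.card_range, nsmul_eq_mul, sin_eq_mul_sinc, hperiod]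
        ring

theorem quantErr_arcP_two_pi {n : ℕ} (hn : n ≠ 0) :
    quantErr (arcP 0 (2 * π)) n = 1 - sinc (π / n) ^ 2 := by
  have hint {α : Finset E2} (hα : α.Nonempty) :
      ∫ x, infSqDist (α : Set E2) x ∂arcP 0 (2 * π) =
        (2 * π)⁻¹ * ∫ θ in 0..2 * π, infSqDist (α : Set E2) (circlePoint θ) := by
    rw [integral_arcP two_pi_pos.le (zero_add _).ge (continuous_infSqDist hα).stronglyMeasurable,
      sub_zero]
  have hlower {α : Finset E2} (hα : α.Nonempty) (hcard : α.card ≤ n) :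
      1 - sinc (π / n) ^ 2 ≤ ∫ x, infSqDist (α : Set E2) x ∂arcP 0 (2 * π) := by
    rw [hint hα, ← div_eq_inv_mul, le_div_iff₀' two_pi_pos]
    exact two_pi_mul_le_integral_infSqDist_circlePoint hn hα hcard
  refine IsLeast.csInf_eq ⟨?_, ?_⟩
  · have hne := nonempty_regularPolygon hn (sinc (π / n))
    have hcard := card_regularPolygon_le n (sinc (π / n))
    refine ⟨regularPolygon n (sinc (π / n)), Finset.finite_toSet _, hne, by simpa using hcard,
      le_antisymm (hlower hne hcard) ?_⟩
    refine (hint hne).trans_le ?_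
    rw [← div_eq_inv_mul, div_le_iff₀' two_pi_pos]
    exact (integral_infSqDist_regularPolygon_le hn _).trans_eq (by ring)
  · rintro _ ⟨α, hfin, hne, hcard, rfl⟩
    lift α to Finset E2 using hfin
    exact hlower hne (by simpa using hcard)

/-! ### Asymptotics -/

lemma tendsto_one_sub_sinc_div_sq :
    Tendsto (fun x => (1 - sinc x) / x ^ 2) (nhdsWithin 0 {0}ᶜ) (nhds (1 / 6)) := by
  have hzero : Tendsto (fun x : ℝ => |x| ^ 2 / 100) (nhdsWithin 0 {0}ᶜ) (nhds 0) := by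
    have hcont : Continuous fun x : ℝ => |x| ^ 2 / 100 := by fun_prop
    simpa using (hcont.tendsto 0).mono_left nhdsWithin_le_nhds
  refine tendsto_iff_norm_sub_tendsto_zero.2 (squeeze_zero_norm' ?_ hzero)
  have hsmall : ∀ᶠ x : ℝ in nhdsWithin 0 {0}ᶜ, |x| ≤ 1 :=
    ((continuous_abs.tendsto' 0 0 abs_zero).eventually_le_const one_pos).filter_mono
      nhdsWithin_le_nhds
  filter_upwards [self_mem_nhdsWithin, hsmall] with x hx hx1
  have hx0 : x ≠ 0 := hx
  have hquot : (1 - sinc x) / x ^ 2 - 1 / 6 = -((sin x - (x - x ^ 3 / 6)) / x ^ 3) := by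
    rw [sinc_of_ne_zero hx0]
    field_simp
    ring
  rw [norm_norm, hquot, norm_neg, norm_div, Real.norm_eq_abs, Real.norm_eq_abs, abs_pow,
    div_le_iff₀ (by positivity)]
  calc |sin x - (x - x ^ 3 / 6)| ≤ |x| ^ 5 / 100 := sin_bound hx1
    _ = |x| ^ 2 / 100 * |x| ^ 3 := by ring

lemma tendsto_one_sub_sinc_sq_div_sq :
    Tendsto (fun x => (1 - sinc x ^ 2) / x ^ 2) (nhdsWithin 0 {0}ᶜ) (nhds (1 / 3)) := by
  have hsinc : Tendsto sinc (nhdsWithin 0 {0}ᶜ) (nhds 1) := by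
    simpa using (continuous_sinc.tendsto 0).mono_left nhdsWithin_le_nhds
  have hlim : (1 / 6 : ℝ) * (1 + 1) = 1 / 3 := by norm_num
  rw [← hlim]
  refine (tendsto_one_sub_sinc_div_sq.mul (hsinc.const_add 1)).congr fun x => ?_
  ring

/-- For the uniform distribution on the full unit circle, for every `n ≥ 1` the
`n`th quantization error is `Vₙ = 1 - (n²/π²) sin²(π/n)`, and consequently the
one-dimensional quantization coefficient equals `π²/3`:
`lim_{n→∞} n² Vₙ = π²/3`. -/
theorem stmt_11 :
    (∀ n : ℕ, 1 ≤ n →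
      quantErr (arcP 0 (2 * Real.pi)) n =
        1 - ((n : ℝ) ^ 2 / Real.pi ^ 2) * Real.sin (Real.pi / n) ^ 2) ∧
    Tendsto (fun n : ℕ => (n : ℝ) ^ 2 * quantErr (arcP 0 (2 * Real.pi)) n)
      atTop (nhds (Real.pi ^ 2 / 3)) := by
  refine ⟨fun n hn => ?_, ?_⟩
  · have hn0 : n ≠ 0 := Nat.one_le_iff_ne_zero.1 hn
    rw [quantErr_arcP_two_pi hn0, sin_eq_mul_sinc]
    field_simp
  · have harg : Tendsto (fun n : ℕ => π / n) atTop (nhdsWithin 0 {0}ᶜ) :=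
      tendsto_nhdsWithin_iff.2 ⟨tendsto_const_div_atTop_nhds_zero_nat π,
        (eventually_ne_atTop 0).mono fun n hn => by simp [hn, pi_ne_zero]⟩
    have hlim := (tendsto_one_sub_sinc_sq_div_sq.comp harg).const_mul (π ^ 2)
    rw [mul_one_div] at hlim
    refine hlim.congr' ?_
    filter_upwards [eventually_ne_atTop 0] with n hn
    rw [quantErr_arcP_two_pi hn, Function.comp_apply]
    field_simp
end
end

section
/- Let P = ½P₁ + ½P₂ be the mixed probability distribution on the boundary of the upper unit semicircular disc, where P₁ is uniform on the base and P₂ is uniform on the semicircular arc. Then the unique optimal set of one-mean for P is {(0, 1/π)}, and the quantization error for one-mean is V₁(P) = 2/3 − 1/π²; that is, the function (a,b) ↦ ∫ ‖x − (a,b)‖² dP(x) attains its minimum value 2/3 − 1/π² exactly at (a,b) = (0, 1/π). -/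
open MeasureTheory Real Filter
open scoped ENNReal

noncomputable section

/-- The base `L₁ = {(t,0) : -1 ≤ t ≤ 1}` of the upper unit semicircular disc. -/
def baseL : Set E2 := segment ℝ (pt (-1) 0) (pt 1 0)

/-- The semicircular arc `L₂ = {(cos t, sin t) : 0 ≤ t ≤ π}`. -/
def semiArc : Set E2 :=
  {p | ∃ θ : ℝ, 0 ≤ θ ∧ θ ≤ Real.pi ∧ p = pt (Real.cos θ) (Real.sin θ)}

/-- The mixed distribution `P = ½P₁ + ½P₂` on the boundary of the upper unit
semicircular disc, where `P₁` is uniform on the base `L₁` (density `1/2` w.r.t.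
arc length) and `P₂` is uniform on the semicircular arc `L₂` (density `1/π`
w.r.t. arc length). -/
def semiP : Measure E2 :=
  (2 : ℝ≥0∞)⁻¹ • ((2 : ℝ≥0∞)⁻¹ • (μH[1] : Measure E2).restrict baseL) +
  (2 : ℝ≥0∞)⁻¹ • ((ENNReal.ofReal Real.pi)⁻¹ • (μH[1] : Measure E2).restrict semiArc)

/-!
For a probability measure with finite second moment and mean `m`, expanding the square gives
`∫ ‖x - p‖² = (∫ ‖x‖² - ‖m‖²) + ‖p - m‖²`, so `m` is the unique best single point. Here
`m = (0, 1/π)` and `∫ ‖x‖² = 2/3`.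

These integrals are against Hausdorff measure, so the substance is that `μH[1]` on a simple arc is
the pushforward of Lebesgue measure under an arc-length parametrization `γ`. One inequality holds
because `γ` is `1`-Lipschitz. For the other, a connected set containing `γ s` and `γ t` has measure
at least `dist (γ s) (γ t)`; hence `t ↦ μH[1] (γ '' [a, t])` grows at rate at least `‖γ'‖ = 1`.
-/

open Set Topology
open scoped RealInnerProductSpace

section HausdorffMeasureOne

variable {X : Type*} [MetricSpace X] [MeasurableSpace X] [BorelSpace X] {γ : ℝ → X} {a b c : ℝ}

theorem edist_le_hausdorffMeasure_one_of_isPreconnected {s : Set X} (hs : IsPreconnected s)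
    {x y : X} (hx : x ∈ s) (hy : y ∈ s) : edist x y ≤ μH[1] s := by
  have hdist : LipschitzWith 1 (dist x) := LipschitzWith.dist_right x
  have hIcc : Icc 0 (dist x y) ⊆ dist x '' s :=
    (hs.image _ hdist.continuous.continuousOn).Icc_subset ⟨x, hx, dist_self x⟩ ⟨y, hy, rfl⟩
  calc edist x y = volume (Icc 0 (dist x y)) := by
        rw [Real.volume_Icc, sub_zero, edist_dist]
    _ ≤ volume (dist x '' s) := measure_mono hIcc
    _ ≤ μH[1] s := by
        simpa [hausdorffMeasure_real] using hdist.hausdorffMeasure_image_le zero_le_one s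

theorem hausdorffMeasure_one_image_le_volume {s : Set ℝ} (hγ : LipschitzOnWith 1 γ s) :
    μH[1] (γ '' s) ≤ volume s := by
  simpa [hausdorffMeasure_real] using hγ.hausdorffMeasure_image_le zero_le_one

theorem hausdorffMeasure_one_image_Icc_add_image_Icc (hγ : ContinuousOn γ (Icc a c))
    (hinj : InjOn γ (Icc a c)) (hab : a ≤ b) (hbc : b ≤ c) :
    μH[1] (γ '' Icc a b) + μH[1] (γ '' Icc b c) = μH[1] (γ '' Icc a c) := by
  have := Measure.nullSingletonClass_hausdorff X one_pos
  have hsub : Ioc b c ⊆ Icc a c := Ioc_subset_Icc_self.trans (Icc_subset_Icc_left hab)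
  have hdisj : Disjoint (γ '' Icc a b) (γ '' Ioc b c) :=
    disjoint_image_image fun s hs t ht hst ↦ (hs.2.trans_lt ht.1).ne <|
      hinj ⟨hs.1, hs.2.trans hbc⟩ (hsub ht) hst
  have hmeas : MeasurableSet (γ '' Ioc b c) :=
    measurableSet_Ioc.image_of_continuousOn_injOn (hγ.mono hsub) (hinj.mono hsub)
  rw [← Icc_union_Ioc_eq_Icc hab hbc, image_union, measure_union hdisj hmeas,
    ← Ioc_insert_left hbc, image_insert_eq, measure_congr (insert_ae_eq_self _ _)]

end HausdorffMeasureOne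

section UnitSpeed

variable {E : Type*} [NormedAddCommGroup E] [NormedSpace ℝ E] {γ γ' : ℝ → E} {a b : ℝ}

theorem sub_le_sub_of_dist_le_sub_of_one_le_norm_deriv {v : ℝ → ℝ} (hab : a ≤ b)
    (hγ : ∀ t ∈ Icc a b, HasDerivWithinAt γ (γ' t) (Icc a b) t)
    (hspeed : ∀ t ∈ Icc a b, 1 ≤ ‖γ' t‖) (hv : ContinuousOn v (Icc a b))
    (hdist : ∀ s ∈ Icc a b, ∀ t ∈ Icc a b, s ≤ t → dist (γ s) (γ t) ≤ v t - v s) :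
    b - a ≤ v b - v a := by
  -- The fencing theorem bounds growth from above, so it is applied to `-v`.
  suffices h : -(v b - v a) ≤ -(b - a) by linarith
  refine image_le_of_liminf_slope_right_le_deriv_boundary (f := fun t ↦ -(v t - v a))
    (B := fun t ↦ -(t - a)) (B' := fun _ ↦ -1) (by fun_prop) (by simp) (by fun_prop)
    (fun t _ ↦ ((hasDerivWithinAt_id t _).sub_const a).fun_neg) (fun s hs r hr ↦ ?_)
    (right_mem_Icc.2 hab)
  have hs' : s ∈ Icc a b := Ico_subset_Icc_self hs
  have hIcc : Icc a b ∈ 𝓝[>] s := Icc_mem_nhdsGT_of_mem hs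
  have hslope : Tendsto (fun t ↦ ‖slope γ s t‖) (𝓝[>] s) (𝓝 ‖γ' s‖) :=
    ((hasDerivWithinAt_iff_tendsto_slope' self_notMem_Ioi).1
      ((hγ s hs').mono_of_mem_nhdsWithin hIcc)).norm
  refine Eventually.frequently ?_
  filter_upwards [hslope.eventually_const_lt ((neg_lt.1 hr).trans_le (hspeed s hs')), hIcc,
    self_mem_nhdsWithin] with t hrt ht hst
  have hst' : 0 < t - s := sub_pos.2 hst
  have hlower : ‖slope γ s t‖ ≤ (v t - v s) / (t - s) := by
    rw [slope_def_module, norm_smul, norm_inv, Real.norm_of_nonneg hst'.le, ← dist_eq_norm',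
      inv_mul_eq_div]
    gcongr
    exact hdist s hs' t ht (le_of_lt hst)
  calc slope (fun t ↦ -(v t - v a)) s t = -((v t - v s) / (t - s)) := by
        rw [slope_def_field]; ring
    _ < r := by linarith

theorem lipschitzOnWith_one_of_monotoneOn_of_sub_le {v : ℝ → ℝ} {S : Set ℝ}
    (hmono : MonotoneOn v S) (hle : ∀ s ∈ S, ∀ t ∈ S, s ≤ t → v t - v s ≤ t - s) :
    LipschitzOnWith 1 v S := by
  refine LipschitzOnWith.of_le_add fun s hs t ht ↦ ?_
  rcases le_total s t with hst | hts
  · linarith [hmono hs ht hst, dist_nonneg (x := s) (y := t)]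
  · rw [Real.dist_eq, abs_of_nonneg (sub_nonneg.2 hts)]
    linarith [hle t ht s hs hts]

/-- `γ` is a simple arc on `[a, b]`, with derivative `γ'` of norm one, that is,
parametrized by arc length; integration over its image against `μH[1]` is then integration in the
parameter. The derivative is one-sided at the endpoints and need not be continuous. -/
structure IsUnitSpeedArc (γ γ' : ℝ → E) (a b : ℝ) : Prop where
  le : a ≤ b
  hasDerivWithinAt : ∀ t ∈ Icc a b, HasDerivWithinAt γ (γ' t) (Icc a b) t
  norm_deriv : ∀ t ∈ Icc a b, ‖γ' t‖ = 1
  injOn : InjOn γ (Icc a b)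

namespace IsUnitSpeedArc

theorem lipschitzOnWith (h : IsUnitSpeedArc γ γ' a b) : LipschitzOnWith 1 γ (Icc a b) :=
  (convex_Icc a b).lipschitzOnWith_of_nnnorm_hasDerivWithin_le h.hasDerivWithinAt
    fun t ht ↦ (h.norm_deriv t ht).le

theorem continuousOn (h : IsUnitSpeedArc γ γ' a b) : ContinuousOn γ (Icc a b) :=
  h.lipschitzOnWith.continuousOn

variable [MeasurableSpace E] [BorelSpace E]

theorem hausdorffMeasure_image_Icc_le (h : IsUnitSpeedArc γ γ' a b) {s t : ℝ} (hs : s ∈ Icc a b)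
    (ht : t ∈ Icc a b) : μH[1] (γ '' Icc s t) ≤ ENNReal.ofReal (t - s) :=
  (hausdorffMeasure_one_image_le_volume
    (h.lipschitzOnWith.mono (Icc_subset_Icc hs.1 ht.2))).trans_eq Real.volume_Icc

theorem dist_le_measureReal_image_Icc (h : IsUnitSpeedArc γ γ' a b) {s t : ℝ}
    (hs : s ∈ Icc a b) (ht : t ∈ Icc a b) (hst : s ≤ t) :
    dist (γ s) (γ t) ≤ (μH[1] : Measure E).real (γ '' Icc s t) := by
  have hconn : IsPreconnected (γ '' Icc s t) :=
    isPreconnected_Icc.image _ (h.continuousOn.mono (Icc_subset_Icc hs.1 ht.2))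
  rw [dist_edist]
  exact ENNReal.toReal_mono
    (ne_top_of_le_ne_top ENNReal.ofReal_ne_top (h.hausdorffMeasure_image_Icc_le hs ht)) <|
    edist_le_hausdorffMeasure_one_of_isPreconnected hconn
      (mem_image_of_mem γ (left_mem_Icc.2 hst)) (mem_image_of_mem γ (right_mem_Icc.2 hst))

theorem measureReal_image_Icc_sub (h : IsUnitSpeedArc γ γ' a b) {s t : ℝ}
    (hs : s ∈ Icc a b) (ht : t ∈ Icc a b) (hst : s ≤ t) :
    (μH[1] : Measure E).real (γ '' Icc a t) - (μH[1] : Measure E).real (γ '' Icc a s) =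
      (μH[1] : Measure E).real (γ '' Icc s t) := by
  have hfin : ∀ r ∈ Icc a b, ∀ u ∈ Icc a b, μH[1] (γ '' Icc r u) ≠ ∞ := fun r hr u hu ↦
    ne_top_of_le_ne_top ENNReal.ofReal_ne_top (h.hausdorffMeasure_image_Icc_le hr hu)
  have hsub : Icc a t ⊆ Icc a b := Icc_subset_Icc_right ht.2
  simp only [measureReal_def]
  rw [← hausdorffMeasure_one_image_Icc_add_image_Icc (h.continuousOn.mono hsub)
      (h.injOn.mono hsub) hs.1 hst,
    ENNReal.toReal_add (hfin a (left_mem_Icc.2 h.le) s hs) (hfin s hs t ht), add_sub_cancel_left]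

theorem hausdorffMeasure_image_Icc (h : IsUnitSpeedArc γ γ' a b) :
    μH[1] (γ '' Icc a b) = ENNReal.ofReal (b - a) := by
  have ha : a ∈ Icc a b := left_mem_Icc.2 h.le
  have hb : b ∈ Icc a b := right_mem_Icc.2 h.le
  let v : ℝ → ℝ := fun t ↦ (μH[1] : Measure E).real (γ '' Icc a t)
  have hdist : ∀ s ∈ Icc a b, ∀ t ∈ Icc a b, s ≤ t → dist (γ s) (γ t) ≤ v t - v s :=
    fun s hs t ht hst ↦ (h.dist_le_measureReal_image_Icc hs ht hst).trans_eq
      (h.measureReal_image_Icc_sub hs ht hst).symm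
  have hlip : LipschitzOnWith 1 v (Icc a b) := by
    refine lipschitzOnWith_one_of_monotoneOn_of_sub_le
      (fun s hs t ht hst ↦ sub_nonneg.1 (dist_nonneg.trans (hdist s hs t ht hst)))
      fun s hs t ht hst ↦ (h.measureReal_image_Icc_sub hs ht hst).trans_le ?_
    exact ENNReal.toReal_le_of_le_ofReal (sub_nonneg.2 hst) (h.hausdorffMeasure_image_Icc_le hs ht)
  refine (h.hausdorffMeasure_image_Icc_le ha hb).antisymm (ENNReal.ofReal_le_of_le_toReal ?_)
  calc b - a ≤ v b - v a := sub_le_sub_of_dist_le_sub_of_one_le_norm_deriv h.le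
        h.hasDerivWithinAt (fun t ht ↦ (h.norm_deriv t ht).ge) hlip.continuousOn hdist
    _ = (μH[1] : Measure E).real (γ '' Icc a b) := h.measureReal_image_Icc_sub ha hb h.le

theorem restrict_hausdorffMeasure_image_Icc (h : IsUnitSpeedArc γ γ' a b) :
    (μH[1] : Measure E).restrict (γ '' Icc a b) = (volume.restrict (Icc a b)).map γ := by
  have hmeas : AEMeasurable γ (volume.restrict (Icc a b)) :=
    h.continuousOn.aemeasurable measurableSet_Icc
  have : IsFiniteMeasure ((μH[1] : Measure E).restrict (γ '' Icc a b)) :=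
    ⟨by rw [Measure.restrict_apply_univ, h.hausdorffMeasure_image_Icc]; exact ENNReal.ofReal_lt_top⟩
  refine Measure.eq_of_le_of_measure_univ_eq (Measure.le_iff.2 fun s hs ↦ ?_) ?_
  · rw [Measure.restrict_apply hs, Measure.map_apply_of_aemeasurable hmeas hs,
      Measure.restrict_apply' measurableSet_Icc, inter_comm, ← image_inter_preimage, inter_comm]
    exact hausdorffMeasure_one_image_le_volume (h.lipschitzOnWith.mono inter_subset_right)
  · rw [Measure.restrict_apply_univ, h.hausdorffMeasure_image_Icc,
      Measure.map_apply_of_aemeasurable hmeas .univ]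
    simp

variable {F : Type*} [NormedAddCommGroup F] {g : E → F}

theorem aestronglyMeasurable_map (h : IsUnitSpeedArc γ γ' a b)
    (hg : ContinuousOn g (γ '' Icc a b)) :
    AEStronglyMeasurable g ((volume.restrict (Icc a b)).map γ) := by
  have hcompact : IsCompact (γ '' Icc a b) := isCompact_Icc.image_of_continuousOn h.continuousOn
  rw [← h.restrict_hausdorffMeasure_image_Icc]
  exact hg.aestronglyMeasurable_of_isCompact hcompact hcompact.measurableSet

theorem integrableOn_image_Icc (h : IsUnitSpeedArc γ γ' a b)
    (hg : ContinuousOn g (γ '' Icc a b)) : IntegrableOn g (γ '' Icc a b) μH[1] := by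
  rw [IntegrableOn, h.restrict_hausdorffMeasure_image_Icc,
    integrable_map_measure (h.aestronglyMeasurable_map hg)
      (h.continuousOn.aemeasurable measurableSet_Icc)]
  exact (hg.comp h.continuousOn (mapsTo_image _ _)).integrableOn_Icc

theorem setIntegral_image_Icc [NormedSpace ℝ F] (h : IsUnitSpeedArc γ γ' a b)
    (hg : ContinuousOn g (γ '' Icc a b)) :
    ∫ x in γ '' Icc a b, g x ∂μH[1] = ∫ t in a..b, g (γ t) := by
  rw [h.restrict_hausdorffMeasure_image_Icc,
    integral_map (h.continuousOn.aemeasurable measurableSet_Icc) (h.aestronglyMeasurable_map hg),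
    intervalIntegral.integral_of_le h.le, integral_Icc_eq_integral_Ioc]

end IsUnitSpeedArc

end UnitSpeed

theorem integral_norm_sub_sq {Ω E : Type*} [MeasurableSpace Ω] [NormedAddCommGroup E]
    [InnerProductSpace ℝ E] [CompleteSpace E] {P : Measure Ω} [IsProbabilityMeasure P]
    {X : Ω → E} (hX : MemLp X 2 P) (p : E) :
    ∫ ω, ‖X ω - p‖ ^ 2 ∂P =
      ∫ ω, ‖X ω‖ ^ 2 ∂P - ‖∫ ω, X ω ∂P‖ ^ 2 + ‖p - ∫ ω, X ω ∂P‖ ^ 2 := by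
  have hint : Integrable X P := hX.integrable one_le_two
  have hsq : Integrable (fun ω ↦ ‖X ω‖ ^ 2) P := hX.integrable_norm_pow two_ne_zero
  have hinner : Integrable (fun ω ↦ 2 * ⟪p, X ω⟫) P := (hint.const_inner p).const_mul 2
  calc ∫ ω, ‖X ω - p‖ ^ 2 ∂P = ∫ ω, (‖p‖ ^ 2 - 2 * ⟪p, X ω⟫ + ‖X ω‖ ^ 2) ∂P := by
        simp only [norm_sub_rev _ p, norm_sub_sq_real]
    _ = ‖p‖ ^ 2 - 2 * ⟪p, ∫ ω, X ω ∂P⟫ + ∫ ω, ‖X ω‖ ^ 2 ∂P := by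
        rw [integral_add (by fun_prop) hsq, integral_sub (integrable_const _) hinner,
          integral_const_mul, integral_inner hint, integral_const, probReal_univ, one_smul]
    _ = _ := by rw [norm_sub_sq_real]; ring

theorem quantErr_one_eq_iInf (P : Measure E2) : quantErr P 1 = ⨅ p, ∫ x, ‖x - p‖ ^ 2 ∂P := by
  refine congrArg sInf (Set.ext fun v ↦ ⟨?_, ?_⟩)
  · rintro ⟨α, hfin, hne, hcard, rfl⟩
    obtain ⟨p, rfl⟩ := ncard_eq_one.1 (hcard.antisymm ((ncard_pos hfin).2 hne))
    exact ⟨p, by simp⟩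
  · rintro ⟨p, rfl⟩
    exact ⟨{p}, finite_singleton p, singleton_nonempty p, by simp, by simp⟩

theorem quantErr_one_eq_sub {P : Measure E2} [IsProbabilityMeasure P]
    (hP : MemLp (fun x ↦ x) 2 P) :
    quantErr P 1 = ∫ x, ‖x‖ ^ 2 ∂P - ‖∫ x, x ∂P‖ ^ 2 := by
  rw [quantErr_one_eq_iInf]
  refine IsLeast.csInf_eq ⟨⟨∫ x, x ∂P, ?_⟩, ?_⟩
  · simp [integral_norm_sub_sq hP]
  · rintro _ ⟨p, rfl⟩
    simp [integral_norm_sub_sq hP]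

@[simp]
theorem pt_apply_zero (a b : ℝ) : pt a b 0 = a := rfl

@[simp]
theorem pt_apply_one (a b : ℝ) : pt a b 1 = b := rfl

theorem norm_pt_sq (a b : ℝ) : ‖pt a b‖ ^ 2 = a ^ 2 + b ^ 2 := by
  simp [EuclideanSpace.norm_sq_eq]

theorem eq_pt {p : E2} {a b : ℝ} (h₀ : p 0 = a) (h₁ : p 1 = b) : p = pt a b := by
  ext i
  fin_cases i
  · exact h₀
  · exact h₁

theorem hasDerivAt_pt {f g : ℝ → ℝ} {f' g' t : ℝ} (hf : HasDerivAt f f' t)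
    (hg : HasDerivAt g g' t) : HasDerivAt (fun t ↦ pt (f t) (g t)) (pt f' g') t := by
  have hvec : HasDerivAt (fun t ↦ ![f t, g t]) ![f', g'] t := by
    rw [hasDerivAt_pi]
    intro i
    fin_cases i
    · exact hf
    · exact hg
  exact (PiLp.continuousLinearEquiv 2 ℝ fun _ : Fin 2 ↦ ℝ).symm.hasFDerivAt.comp_hasDerivAt t hvec

theorem smul_pt_add_smul_pt (u v a b c d : ℝ) :
    u • pt a b + v • pt c d = pt (u * a + v * c) (u * b + v * d) :=
  eq_pt (by simp) (by simp)

theorem baseL_eq_image : baseL = (fun t ↦ pt t 0) '' Icc (-1) 1 := by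
  ext p
  constructor
  · rintro ⟨u, v, hu, hv, huv, rfl⟩
    refine ⟨v - u, ⟨by linarith, by linarith⟩, ?_⟩
    rw [smul_pt_add_smul_pt]
    exact congrArg₂ pt (by ring) (by ring)
  · rintro ⟨t, ⟨hlower, hupper⟩, rfl⟩
    refine ⟨(1 - t) / 2, (1 + t) / 2, by linarith, by linarith, by ring, ?_⟩
    rw [smul_pt_add_smul_pt]
    exact congrArg₂ pt (by ring) (by ring)

theorem semiArc_eq_image : semiArc = (fun θ ↦ pt (cos θ) (sin θ)) '' Icc 0 π := by
  ext p
  simp [semiArc, and_assoc, eq_comm]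

theorem isUnitSpeedArc_base : IsUnitSpeedArc (fun t ↦ pt t 0) (fun _ ↦ pt 1 0) (-1) 1 where
  le := by norm_num
  hasDerivWithinAt t _ := (hasDerivAt_pt (hasDerivAt_id t) (hasDerivAt_const t 0)).hasDerivWithinAt
  norm_deriv _ _ := by
    rw [← sq_eq_sq₀ (norm_nonneg _) zero_le_one, norm_pt_sq]
    norm_num
  injOn _ _ _ _ hst := congrArg (· 0) hst

theorem isUnitSpeedArc_semicircle :
    IsUnitSpeedArc (fun θ ↦ pt (cos θ) (sin θ)) (fun θ ↦ pt (-sin θ) (cos θ)) 0 π where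
  le := pi_pos.le
  hasDerivWithinAt θ _ := (hasDerivAt_pt (hasDerivAt_cos θ) (hasDerivAt_sin θ)).hasDerivWithinAt
  norm_deriv θ _ := by
    rw [← sq_eq_sq₀ (norm_nonneg _) zero_le_one, norm_pt_sq, neg_sq, sin_sq_add_cos_sq, one_pow]
  injOn _ hs _ ht hst := injOn_cos hs ht (congrArg (· 0) hst)

section SemiP

variable {F : Type*} [NormedAddCommGroup F] {g : E2 → F}

theorem integrableOn_baseL (hg : Continuous g) : IntegrableOn g baseL μH[1] := by
  rw [baseL_eq_image]
  exact isUnitSpeedArc_base.integrableOn_image_Icc hg.continuousOn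

theorem integrableOn_semiArc (hg : Continuous g) : IntegrableOn g semiArc μH[1] := by
  rw [semiArc_eq_image]
  exact isUnitSpeedArc_semicircle.integrableOn_image_Icc hg.continuousOn

theorem ofReal_pi_inv_ne_top : (ENNReal.ofReal π)⁻¹ ≠ ∞ := by
  simp [pi_pos]

theorem integrable_semiP (hg : Continuous g) : Integrable g semiP :=
  (((integrableOn_baseL hg).smul_measure (by simp)).smul_measure (by simp)).add_measure
    (((integrableOn_semiArc hg).smul_measure ofReal_pi_inv_ne_top).smul_measure (by simp))

theorem integral_semiP [NormedSpace ℝ F] (hg : Continuous g) :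
    ∫ x, g x ∂semiP =
      (1 / 4 : ℝ) • (∫ t in (-1)..1, g (pt t 0)) +
        (1 / (2 * π)) • ∫ θ in 0..π, g (pt (cos θ) (sin θ)) := by
  have hbase : ∫ x in baseL, g x ∂μH[1] = ∫ t in (-1)..1, g (pt t 0) := by
    rw [baseL_eq_image, isUnitSpeedArc_base.setIntegral_image_Icc hg.continuousOn]
  have harc : ∫ x in semiArc, g x ∂μH[1] = ∫ θ in 0..π, g (pt (cos θ) (sin θ)) := by
    rw [semiArc_eq_image, isUnitSpeedArc_semicircle.setIntegral_image_Icc hg.continuousOn]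
  have hintegrable := integrable_add_measure.1 (integrable_semiP hg)
  rw [semiP, integral_add_measure hintegrable.1 hintegrable.2]
  simp only [integral_smul_measure, hbase, harc, smul_smul, ENNReal.toReal_mul,
    ENNReal.toReal_inv, ENNReal.toReal_ofNat, ENNReal.toReal_ofReal pi_pos.le]
  congr 2
  · norm_num
  · rw [one_div, mul_inv]

instance isProbabilityMeasure_semiP : IsProbabilityMeasure semiP := by
  rw [isProbabilityMeasure_iff_real]
  calc semiP.real univ = ∫ _, (1 : ℝ) ∂semiP := by simp
    _ = 1 / 4 * 2 + 1 / (2 * π) * π := by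
      rw [integral_semiP continuous_const]
      norm_num
    _ = 1 := by
      field_simp
      norm_num

theorem memLp_id_semiP : MemLp (fun x ↦ x) 2 semiP :=
  (memLp_two_iff_integrable_sq_norm aestronglyMeasurable_id).2 (integrable_semiP (by fun_prop))

theorem integral_id_semiP : ∫ x, x ∂semiP = pt 0 (1 / π) := by
  have heval (i : Fin 2) : Continuous fun x : E2 ↦ x i := by fun_prop
  have hcoord := eval_integral_piLp (f := fun x : E2 ↦ x) fun i ↦ integrable_semiP (heval i)
  refine eq_pt ?_ ?_
  · rw [hcoord, integral_semiP (heval 0)]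
    simp
  · have hsin : ∫ θ in 0..π, sin θ = 2 := by norm_num [integral_sin]
    rw [hcoord, integral_semiP (heval 1)]
    simp only [pt_apply_one, intervalIntegral.integral_zero, hsin, smul_eq_mul]
    field_simp
    norm_num

theorem integral_norm_sq_semiP : ∫ x, ‖x‖ ^ 2 ∂semiP = 2 / 3 := by
  have hbase : ∫ t in (-1)..1, ‖pt t 0‖ ^ 2 = 2 / 3 := by
    norm_num [norm_pt_sq, integral_pow]
  have harc : ∫ θ in 0..π, ‖pt (cos θ) (sin θ)‖ ^ 2 = π := by
    simp [norm_pt_sq]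
  rw [integral_semiP (by fun_prop), hbase, harc, smul_eq_mul, smul_eq_mul]
  field_simp
  norm_num

end SemiP

theorem integral_norm_sub_sq_semiP (p : E2) :
    ∫ x, ‖x - p‖ ^ 2 ∂semiP = 2 / 3 - 1 / π ^ 2 + ‖p - pt 0 (1 / π)‖ ^ 2 := by
  rw [integral_norm_sub_sq memLp_id_semiP, integral_norm_sq_semiP, integral_id_semiP, norm_pt_sq]
  ring

theorem quantErr_semiP_one : quantErr semiP 1 = 2 / 3 - 1 / π ^ 2 := by
  rw [quantErr_one_eq_sub memLp_id_semiP, integral_norm_sq_semiP, integral_id_semiP, norm_pt_sq]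
  ring

/-- For the mixed distribution on the boundary of the semicircular disc, the
unique optimal set of one-mean is `{(0, 1/π)}` and `V₁ = 2/3 - 1/π²`: the
function `(a,b) ↦ ∫ ‖x - (a,b)‖² dP` attains its minimum value `2/3 - 1/π²`
exactly at `(0, 1/π)`. -/
theorem stmt_13 :
    quantErr semiP 1 = 2 / 3 - 1 / Real.pi ^ 2 ∧
    (∫ x, ‖x - pt 0 (1 / Real.pi)‖ ^ 2 ∂semiP) = 2 / 3 - 1 / Real.pi ^ 2 ∧
    (∀ p : E2, p ≠ pt 0 (1 / Real.pi) →
      2 / 3 - 1 / Real.pi ^ 2 < ∫ x, ‖x - p‖ ^ 2 ∂semiP) := by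
  refine ⟨quantErr_semiP_one, ?_, fun p hp ↦ ?_⟩
  · rw [integral_norm_sub_sq_semiP, sub_self, norm_zero, zero_pow two_ne_zero, add_zero]
  · rw [integral_norm_sub_sq_semiP]
    have hpos : 0 < ‖p - pt 0 (1 / π)‖ := norm_sub_pos_iff.2 hp
    exact lt_add_of_pos_right _ (pow_pos hpos 2)
end
end
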